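/- arXiv:1602.02108 — 7 statements merged into one kernel-verified Lean document; each statement's English description precedes it below -/
import Mathlib

section
/- Let μ ∈ ℝ, c ≠ 0 and σ > 0 with μc ≥ 0, and let T be a random variable whose law has density f(t) = |c| / (σ√(2πt³)) · exp(−(μt−c)² / (2σ²t)) for t > 0 (and 0 for t ≤ 0) with respect to Lebesgue measure. Then the random variable H(T) = (μT − c)² / (σ²T) has the χ²(1) distribution, i.e., the law of H(T) equals the law of Z² for Z standard normal. -/
open MeasureTheory ProbabilityTheory Real

lemma aux_sqrt (a b t : ℝ) (ha : 0 ≤ a) (hb : 0 < b) (ht : 0 < t) :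
    √(((a * t - b) / √t) ^ 2 + 4 * a * b) = (a * t + b) / √t := by
  have h1 : 0 < √t := Real.sqrt_pos.2 ht
  have h2 : √t ^ 2 = t := Real.sq_sqrt ht.le
  rw [show ((a * t - b) / √t) ^ 2 + 4 * a * b = ((a * t + b) / √t) ^ 2 by
    rw [div_pow, div_pow, h2]; field_simp; ring]
  exact Real.sqrt_sq (by positivity)

lemma aux_deriv (a b t : ℝ) (ht : 0 < t) :
    HasDerivAt (fun t => (a * t - b) / √t) ((a * t + b) / (2 * t * √t)) t := by
  have h1 : 0 < √t := Real.sqrt_pos.2 ht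
  have h2 : √t ^ 2 = t := Real.sq_sqrt ht.le
  have h := (((hasDerivAt_id t).const_mul a).sub_const b).div (Real.hasDerivAt_sqrt ht.ne') h1.ne'
  refine h.congr_deriv ?_
  simp only [id]
  rw [h2]
  field_simp
  rw [h2]
  ring

lemma aux_r (a b t : ℝ) (ha : 0 ≤ a) (hb : 0 < b) (ht : 0 < t) :
    √(((a * t - b) / √t) ^ 2 + 4 * a * b) - (a * t - b) / √t = 2 * b / √t := by
  rw [aux_sqrt a b t ha hb ht]; ring

lemma aux_inj (a b : ℝ) (ha : 0 ≤ a) (hb : 0 < b) :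
    Set.InjOn (fun t => (a * t - b) / √t) (Set.Ioi 0) := by
  intro s hs t ht h
  have hs : 0 < s := hs
  have ht : 0 < t := ht
  simp only at h
  have e1 := aux_r a b s ha hb hs
  rw [h, aux_r a b t ha hb ht] at e1
  have h1 : 0 < √t := Real.sqrt_pos.2 ht
  have h2 : 0 < √s := Real.sqrt_pos.2 hs
  field_simp at e1
  exact (Real.sqrt_inj hs.le ht.le).1 e1

lemma aux_surj (a b w : ℝ) (ha : 0 ≤ a) (hb : 0 < b) (h : 0 < √(w ^ 2 + 4 * a * b) - w) :
    w ∈ (fun t => (a * t - b) / √t) '' (Set.Ioi 0) := by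
  set D := √(w ^ 2 + 4 * a * b) with hD
  have hD2 : D ^ 2 = w ^ 2 + 4 * a * b := Real.sq_sqrt (by positivity)
  have hp : 0 < 2 * b / (D - w) := by positivity
  refine ⟨(2 * b / (D - w)) ^ 2, Set.mem_Ioi.2 (by positivity), ?_⟩
  simp only
  rw [Real.sqrt_sq hp.le]
  have : D - w ≠ 0 := h.ne'
  field_simp
  linear_combination (-1) * hD2

lemma aux_abs (a b w : ℝ) (ha : 0 ≤ a) (hb : 0 < b) : |w| ≤ √(w ^ 2 + 4 * a * b) := by
  apply Real.abs_le_sqrt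
  have : 0 ≤ a * b := by positivity
  linarith

lemma aux_div (a b w : ℝ) (ha : 0 ≤ a) (hb : 0 < b) : |w / √(w ^ 2 + 4 * a * b)| ≤ 1 := by
  rw [abs_div, abs_of_nonneg (Real.sqrt_nonneg _)]
  exact div_le_one_of_le₀ (aux_abs a b w ha hb) (Real.sqrt_nonneg _)

lemma aux_main (a b : ℝ) (ha : 0 ≤ a) (hb : 0 < b) (g : ℝ → ENNReal) (hg : Measurable g) :
    ∫⁻ t in Set.Ioi 0, ENNReal.ofReal (b / √(2 * π * t ^ 3) * rexp (-(a * t - b) ^ 2 / (2 * t)))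
        * g ((a * t - b) ^ 2 / t)
      = ∫⁻ w, gaussianPDF 0 1 w * g (w ^ 2) := by
  set G : ℝ → ENNReal := fun w =>
    ENNReal.ofReal (gaussianPDFReal 0 1 w * (1 - w / √(w ^ 2 + 4 * a * b))) * g (w ^ 2) with hG
  have hGm : Measurable G := by
    have := measurable_gaussianPDFReal 0 1
    fun_prop
  have hcv := lintegral_image_eq_lintegral_abs_deriv_mul (measurableSet_Ioi (a := (0:ℝ)))
    (fun t ht => (aux_deriv a b t ht).hasDerivWithinAt) (aux_inj a b ha hb) G
  have e1 : ∫⁻ t in Set.Ioi 0, ENNReal.ofReal (b / √(2 * π * t ^ 3) *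
        rexp (-(a * t - b) ^ 2 / (2 * t))) * g ((a * t - b) ^ 2 / t)
      = ∫⁻ w in (fun t => (a * t - b) / √t) '' (Set.Ioi 0), G w := by
    rw [hcv]
    refine setLIntegral_congr_fun measurableSet_Ioi ?_
    intro t ht
    have ht : 0 < t := ht
    have h1 : 0 < √t := Real.sqrt_pos.2 ht
    have h2 : √t ^ 2 = t := Real.sq_sqrt ht.le
    have hab : 0 < a * t + b := by positivity
    simp only [hG]
    rw [← mul_assoc, ← ENNReal.ofReal_mul (abs_nonneg _), aux_sqrt a b t ha hb ht]
    rw [div_pow, h2]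
    congr 2
    rw [abs_of_pos (by positivity), gaussianPDFReal]
    simp only [sub_zero, NNReal.coe_one, mul_one]
    rw [div_pow, h2]
    have h3 : √(2 * π * t ^ 3) = √(2 * π) * (t * √t) := by
      rw [Real.sqrt_mul (by positivity)]
      congr 1
      rw [show t ^ 3 = t ^ 2 * t by ring, Real.sqrt_mul (by positivity), Real.sqrt_sq ht.le]
    rw [h3]
    have h4 : -(a * t - b) ^ 2 / (2 * t) = -((a * t - b) ^ 2 / t) / 2 := by field_simp
    rw [h4]
    have h5 : 0 < √(2 * π) := Real.sqrt_pos.2 (by positivity)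
    have h6 : 1 - (a * t - b) / √t / ((a * t + b) / √t) = 2 * b / (a * t + b) := by
      field_simp; ring
    rw [h6]
    field_simp
  have e2 : ∫⁻ w in (fun t => (a * t - b) / √t) '' (Set.Ioi 0), G w = ∫⁻ w, G w := by
    apply le_antisymm (setLIntegral_le_lintegral _ _)
    have h0 : ∀ᵐ w : ℝ ∂volume, w ≠ 0 := by simp [ae_iff]
    have hms : MeasurableSet ((fun t => (a * t - b) / √t) '' (Set.Ioi 0)) :=
      measurable_image_of_fderivWithin measurableSet_Ioi
        (fun t ht => (aux_deriv a b t ht).hasDerivWithinAt.hasFDerivWithinAt) (aux_inj a b ha hb)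
    rw [← lintegral_indicator hms]
    apply lintegral_mono_ae
    filter_upwards [h0] with w hw
    by_cases hm : w ∈ (fun t => (a * t - b) / √t) '' (Set.Ioi 0)
    · rw [Set.indicator_of_mem hm]
    · have h := mt (aux_surj a b w ha hb) hm
      have h' := (le_abs_self w).trans (aux_abs a b w ha hb)
      have heq : √(w ^ 2 + 4 * a * b) = w := by linarith
      have : G w = 0 := by
        simp only [hG]
        rw [heq, div_self hw]; simp
      rw [this]; exact zero_le
  have e3 : ∫⁻ w, G w + G (-w) = 2 * ∫⁻ w, G w := by
    rw [lintegral_add_left hGm, lintegral_neg_eq_self G, two_mul]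
  have e4 : ∀ w, G w + G (-w) = 2 * (gaussianPDF 0 1 w * g (w ^ 2)) := by
    intro w
    have hd := abs_le.1 (aux_div a b w ha hb)
    have hp := gaussianPDFReal_nonneg 0 1 w
    have hs : gaussianPDFReal 0 1 (-w) = gaussianPDFReal 0 1 w := by simp [gaussianPDFReal]
    simp only [hG, neg_sq, hs]
    rw [← add_mul, ← ENNReal.ofReal_add, ← mul_assoc, gaussianPDF]
    · congr 1
      rw [show (2 : ENNReal) = ENNReal.ofReal 2 by simp, ← ENNReal.ofReal_mul (by norm_num)]
      congr 1; ring
    · exact mul_nonneg hp (by linarith)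
    · rw [neg_div]; exact mul_nonneg hp (by linarith)
  have e5 : 2 * ∫⁻ w, gaussianPDF 0 1 w * g (w ^ 2) = 2 * ∫⁻ w, G w := by
    rw [← e3, ← lintegral_const_mul' _ _ (by simp)]
    simp only [e4]
  rw [e1, e2]
  exact ((ENNReal.mul_right_inj (by simp) (by simp)).1 e5).symm

/-- If `T` has the inverse Gaussian first-passage density with parameters `μ`, `c ≠ 0`,
`σ > 0` and `μ c ≥ 0`, then `H(T) = (μ T − c)² / (σ² T)` has the `χ²(1)` distribution,
i.e. the law of `Z²` for `Z` standard normal. -/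
theorem stmt2 {Ω : Type*} [MeasurableSpace Ω] (P : Measure Ω) [IsProbabilityMeasure P]
    (μ c σ : ℝ) (hc : c ≠ 0) (hσ : 0 < σ) (hμc : 0 ≤ μ * c)
    (T : Ω → ℝ) (hTm : Measurable T)
    (hlaw : Measure.map T P = volume.withDensity (fun t =>
      ENNReal.ofReal (if 0 < t then
        |c| / (σ * Real.sqrt (2 * π * t ^ 3)) *
          Real.exp (-(μ * t - c) ^ 2 / (2 * σ ^ 2 * t))
      else 0))) :
    Measure.map (fun ω => (μ * T ω - c) ^ 2 / (σ ^ 2 * T ω)) P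
      = (gaussianReal 0 1).map (fun z => z ^ 2) := by
  have hb : 0 < |c| / σ := by positivity
  have ha : 0 ≤ |μ| / σ := by positivity
  have hsq : ∀ t, (|μ| / σ * t - |c| / σ) ^ 2 = (μ * t - c) ^ 2 / σ ^ 2 := by
    intro t
    have h1 : |μ| * |c| = μ * c := by rw [← abs_mul, abs_of_nonneg hμc]
    field_simp
    have h2 := sq_abs μ
    have h3 := sq_abs c
    linear_combination t ^ 2 * h2 + h3 - 2 * t * h1
  have hH : Measurable (fun t : ℝ => (μ * t - c) ^ 2 / (σ ^ 2 * t)) := by fun_prop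
  have hcomp : Measure.map (fun ω => (μ * T ω - c) ^ 2 / (σ ^ 2 * T ω)) P
      = (Measure.map T P).map (fun t : ℝ => (μ * t - c) ^ 2 / (σ ^ 2 * t)) := by
    rw [Measure.map_map hH hTm]; rfl
  rw [hcomp, hlaw]
  refine Measure.ext_of_lintegral _ fun g hg => ?_
  have hm2 : Measurable (fun z : ℝ => z ^ 2) := by fun_prop
  have hite : Measurable (fun t : ℝ => ENNReal.ofReal (if 0 < t then
        |c| / (σ * Real.sqrt (2 * π * t ^ 3)) *
          Real.exp (-(μ * t - c) ^ 2 / (2 * σ ^ 2 * t))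
      else 0)) := by
    refine ENNReal.measurable_ofReal.comp (Measurable.ite measurableSet_Ioi ?_ ?_) <;> fun_prop
  rw [lintegral_map hg hH, lintegral_map hg hm2, gaussianReal_of_var_ne_zero 0 one_ne_zero,
    lintegral_withDensity_eq_lintegral_mul _ hite (g := fun t => g ((μ * t - c) ^ 2 / (σ ^ 2 * t))) (hg.comp hH),
    lintegral_withDensity_eq_lintegral_mul _ (measurable_gaussianPDF 0 1)
      (g := fun z => g (z ^ 2)) (hg.comp hm2)]
  simp only [Pi.mul_apply]
  refine Eq.trans ?_ (aux_main _ _ ha hb g hg)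
  rw [← lintegral_indicator measurableSet_Ioi]
  refine lintegral_congr fun t => ?_
  by_cases ht : 0 < t
  · rw [Set.indicator_of_mem (show t ∈ Set.Ioi 0 from ht), if_pos ht, neg_div, neg_div, hsq]
    simp only [div_div]
    rw [show σ ^ 2 * (2 * t) = 2 * σ ^ 2 * t by ring]
  · rw [Set.indicator_of_notMem (show t ∉ Set.Ioi 0 from ht), if_neg ht]; simp
end

section
/- Let μ ∈ ℝ, c ≠ 0 and σ > 0 with μc ≥ 0. Then ∫₀^∞ |c| / (σ√(2πt³)) · exp(−(μt−c)² / (2σ²t)) dt = 1; that is, the inverse Gaussian first-passage density with parameters μ, c, σ is a probability density on (0,∞). -/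
open MeasureTheory Real

open Filter Topology

noncomputable def igG (x : ℝ) : ℝ := ∫ u in (0:ℝ)..x, Real.exp (-(1/2) * u ^ 2)

lemma igG_deriv (x : ℝ) : HasDerivAt igG (Real.exp (-(1/2) * x ^ 2)) x := by
  have hc : Continuous (fun u : ℝ => Real.exp (-(1/2) * u ^ 2)) := by fun_prop
  exact intervalIntegral.integral_hasDerivAt_right (hc.intervalIntegrable _ _)
    (hc.stronglyMeasurableAtFilter _ _) hc.continuousAt

lemma igG_neg (x : ℝ) : igG (-x) = - igG x := by
  have h := intervalIntegral.integral_comp_neg (a := 0) (b := x)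
    (fun u : ℝ => Real.exp (-(1/2) * u ^ 2))
  simp only [neg_sq, neg_zero] at h
  unfold igG
  rw [h, intervalIntegral.integral_symm]

lemma igG_top : Tendsto igG atTop (𝓝 (√(2 * π) / 2)) := by
  have h := intervalIntegral_tendsto_integral_Ioi (μ := volume) (l := atTop) (b := fun x : ℝ => x)
    (f := fun u : ℝ => Real.exp (-(1/2) * u ^ 2)) 0
    (integrable_exp_neg_mul_sq (by norm_num : (0:ℝ) < 1/2)).integrableOn tendsto_id
  rw [integral_gaussian_Ioi] at h
  have e : π / (1/2) = 2 * π := by ring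
  rw [e] at h
  exact h

lemma igG_bot : Tendsto igG atBot (𝓝 (-(√(2 * π) / 2))) := by
  have h := (igG_top.comp tendsto_neg_atBot_atTop).neg
  refine h.congr fun x => ?_
  simp [igG_neg]

noncomputable def igF (a b t : ℝ) : ℝ :=
  igG (a * √t - b / √t) - Real.exp (2 * a * b) * igG (a * √t + b / √t)

lemma igF_deriv (a b t : ℝ) (ht : 0 < t) :
    HasDerivAt (igF a b) (b / √t ^ 3 * Real.exp (-(a * t - b) ^ 2 / (2 * t))) t := by
  have hs : 0 < √t := Real.sqrt_pos.2 ht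
  have h1 := Real.hasDerivAt_sqrt ht.ne'
  have h2 := h1.const_mul a
  have h3 := (h1.inv hs.ne').const_mul b
  have h23 : HasDerivAt (fun t => a * √t - b / √t)
      (a * (1 / (2 * √t)) - b * (-(1 / (2 * √t)) / √t ^ 2)) t := h2.sub h3
  have h23' : HasDerivAt (fun t => a * √t + b / √t)
      (a * (1 / (2 * √t)) + b * (-(1 / (2 * √t)) / √t ^ 2)) t := h2.add h3
  have h4 := (igG_deriv (a * √t - b / √t)).comp t h23
  have h5 := ((igG_deriv (a * √t + b / √t)).comp t h23').const_mul (Real.exp (2 * a * b))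
  have h6 := h4.sub h5
  have e : Real.exp (2 * a * b) * Real.exp (-(1/2) * (a * √t + b / √t) ^ 2)
      = Real.exp (-(1/2) * (a * √t - b / √t) ^ 2) := by
    rw [← Real.exp_add]; congr 1; field_simp; ring
  have e2 : -(a * t - b) ^ 2 / (2 * t) = -(1/2) * (a * √t - b / √t) ^ 2 := by
    have : t = √t ^ 2 := (Real.sq_sqrt ht.le).symm
    generalize √t = s at *
    subst this
    field_simp
  refine HasDerivAt.congr_deriv (f := igF a b) h6 ?_
  rw [← mul_assoc (Real.exp (2 * a * b)), e, e2]
  field_simp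
  ring

lemma ig_main (a b : ℝ) (ha : 0 ≤ a) (hb : 0 < b) :
    ∫ t in Set.Ioi (0:ℝ), b / √t ^ 3 * Real.exp (-(a * t - b) ^ 2 / (2 * t)) = √(2 * π) := by
  have s0 : Tendsto (fun t : ℝ => √t) (𝓝[>] 0) (𝓝[>] 0) := by
    refine tendsto_nhdsWithin_iff.2 ⟨?_, ?_⟩
    · have := Real.continuous_sqrt.tendsto 0
      rw [Real.sqrt_zero] at this
      exact this.mono_left nhdsWithin_le_nhds
    · filter_upwards [self_mem_nhdsWithin] with t ht
      exact Real.sqrt_pos.2 ht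
  have s0' : Tendsto (fun t : ℝ => a * √t) (𝓝[>] 0) (𝓝 0) := by
    simpa using (s0.mono_right nhdsWithin_le_nhds).const_mul a
  have s1 : Tendsto (fun t : ℝ => b / √t) (𝓝[>] 0) atTop :=
    (tendsto_inv_nhdsGT_zero.comp s0).const_mul_atTop hb
  have l0 : Tendsto (igF a b) (𝓝[>] 0)
      (𝓝 (-(√(2 * π) / 2) - Real.exp (2 * a * b) * (√(2 * π) / 2))) := by
    refine (igG_bot.comp ?_).sub ((igG_top.comp ?_).const_mul _)
    · simpa only [sub_eq_add_neg, Function.comp_def] using s0'.add_atBot (tendsto_neg_atTop_atBot.comp s1)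
    · exact s0'.add_atTop s1
  have s2 : Tendsto (fun t : ℝ => b / √t) atTop (𝓝 0) :=
    Real.tendsto_sqrt_atTop.const_div_atTop b
  have l1 : Tendsto (igF a b) atTop
      (𝓝 (√(2 * π) / 2 - Real.exp (2 * a * b) * (√(2 * π) / 2))) := by
    rcases ha.eq_or_lt with rfl | ha
    · have hg := (igG_deriv 0).continuousAt.tendsto
      have s3 : Tendsto (fun t : ℝ => 0 * √t - b / √t) atTop (𝓝 0) := by simpa using s2.neg
      have s4 : Tendsto (fun t : ℝ => 0 * √t + b / √t) atTop (𝓝 0) := by simpa using s2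
      have := (hg.comp s3).sub ((hg.comp s4).const_mul (Real.exp (2 * 0 * b)))
      have e : √(2 * π) / 2 - Real.exp (2 * 0 * b) * (√(2 * π) / 2)
        = igG 0 - Real.exp (2 * 0 * b) * igG 0 := by simp
      rw [e]
      exact this
    · have s3 := Real.tendsto_sqrt_atTop.const_mul_atTop ha
      refine (igG_top.comp ?_).sub ((igG_top.comp ?_).const_mul _)
      · simpa only [sub_eq_add_neg] using s3.atTop_add s2.neg
      · exact s3.atTop_add s2
  set A := -(√(2 * π) / 2) - Real.exp (2 * a * b) * (√(2 * π) / 2) with hA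
  have hev : ∀ x : ℝ, 0 < x → igF a b =ᶠ[𝓝 x] Function.update (igF a b) 0 A := fun x hx => by
    filter_upwards [lt_mem_nhds hx] with y hy
    rw [Function.update_of_ne hy.ne']
  have key := integral_Ioi_of_hasDerivAt_of_nonneg (a := 0) (g := Function.update (igF a b) 0 A)
    (g' := fun t => b / √t ^ 3 * Real.exp (-(a * t - b) ^ 2 / (2 * t)))
    (l := √(2 * π) / 2 - Real.exp (2 * a * b) * (√(2 * π) / 2)) ?_ ?_ ?_ ?_
  · rw [key, Function.update_self, hA]; ring
  · rw [continuousWithinAt_update_same]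
    simpa using l0
  · intro x hx
    exact (igF_deriv a b x hx).congr_of_eventuallyEq (hev x hx).symm
  · intro x hx
    positivity
  · refine l1.congr' ?_
    filter_upwards [eventually_gt_atTop 0] with y hy
    rw [Function.update_of_ne hy.ne']

/-- The inverse Gaussian first-passage density with parameters `μ`, `c ≠ 0`, `σ > 0`
integrates to `1` over `(0, ∞)` when `μ c ≥ 0`. -/
theorem stmt3 (μ c σ : ℝ) (hc : c ≠ 0) (hσ : 0 < σ) (hμc : 0 ≤ μ * c) :
    ∫ t in Set.Ioi (0 : ℝ),
      |c| / (σ * Real.sqrt (2 * π * t ^ 3)) *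
        Real.exp (-(μ * t - c) ^ 2 / (2 * σ ^ 2 * t)) = 1 := by
  have hm := ig_main (|μ| / σ) (|c| / σ) (by positivity) (by positivity)
  have hp : 0 < √(2 * π) := by positivity
  have h : ∫ t in Set.Ioi (0 : ℝ),
      |c| / (σ * Real.sqrt (2 * π * t ^ 3)) *
        Real.exp (-(μ * t - c) ^ 2 / (2 * σ ^ 2 * t)) =
      ∫ t in Set.Ioi (0:ℝ), (√(2 * π))⁻¹ * ((|c| / σ) / √t ^ 3 *
        Real.exp (-((|μ| / σ) * t - |c| / σ) ^ 2 / (2 * t))) := by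
    refine setIntegral_congr_fun measurableSet_Ioi fun t ht => ?_
    have ht : 0 < t := ht
    have hs : 0 < √t := Real.sqrt_pos.2 ht
    have e1 : √(2 * π * t ^ 3) = √(2 * π) * √t ^ 3 := by
      rw [Real.sqrt_mul (by positivity)]
      congr 1
      rw [Real.sqrt_eq_iff_mul_self_eq (by positivity) (by positivity)]
      symm
      calc √t ^ 3 * √t ^ 3 = (√t ^ 2) ^ 3 := by ring
        _ = t ^ 3 := by rw [Real.sq_sqrt ht.le]
    have e2 : -((|μ| / σ) * t - |c| / σ) ^ 2 / (2 * t)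
        = -(μ * t - c) ^ 2 / (2 * σ ^ 2 * t) := by
      have hab : |μ| * |c| = μ * c := by rw [← abs_mul, abs_of_nonneg hμc]
      have : (μ * t - c) ^ 2 = (|μ| * t - |c|) ^ 2 := by
        have h1 := sq_abs μ
        have h2 := sq_abs c
        linear_combination (-t ^ 2) * h1 - h2 + 2 * t * hab
      rw [this]
      field_simp
    rw [e1, e2]
    field_simp
  rw [h, integral_const_mul, hm, inv_mul_cancel₀ hp.ne']
end

section
/- Let μ ∈ ℝ, c ≠ 0 and σ > 0 with μc < 0. Then ∫₀^∞ |c| / (σ√(2πt³)) · exp(−(μt−c)² / (2σ²t)) dt = exp(2μc/σ²), which is strictly less than 1; that is, the inverse Gaussian first-passage density is defective when μc < 0. -/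
open MeasureTheory Real

lemma erf_aux : ∃ P : ℝ → ℝ, (∀ x, HasDerivAt P (Real.exp (-x ^ 2)) x) ∧
    Filter.Tendsto P Filter.atTop (nhds (√π / 2)) ∧
    Filter.Tendsto P Filter.atBot (nhds (-(√π / 2))) := by
  have hcont : Continuous (fun x : ℝ => Real.exp (-x ^ 2)) := by fun_prop
  have hint : Integrable (fun x : ℝ => Real.exp (-x ^ 2)) := by
    simpa using integrable_exp_neg_mul_sq (b := 1) one_pos
  have hI : ∫ x in Set.Ioi (0 : ℝ), Real.exp (-x ^ 2) = √π / 2 := by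
    simpa using integral_gaussian_Ioi 1
  have hJ : ∫ x in Set.Iic (0 : ℝ), Real.exp (-x ^ 2) = √π / 2 := by
    have := integral_comp_neg_Iic (0 : ℝ) (fun x : ℝ => Real.exp (-x ^ 2))
    simp only [neg_sq, neg_zero] at this
    rw [this, hI]
  refine ⟨fun x => ∫ u in (0 : ℝ)..x, Real.exp (-u ^ 2), fun x => ?_, ?_, ?_⟩
  · exact intervalIntegral.integral_hasDerivAt_right (hcont.intervalIntegrable _ _)
      (hcont.stronglyMeasurableAtFilter _ _) hcont.continuousAt
  · rw [← hI]
    exact intervalIntegral_tendsto_integral_Ioi 0 hint.integrableOn Filter.tendsto_id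
  · rw [← hJ]
    have := (intervalIntegral_tendsto_integral_Iic 0 hint.integrableOn
      (Filter.tendsto_id (α := ℝ) (x := Filter.atBot))).neg
    refine this.congr fun x => ?_
    rw [intervalIntegral.integral_symm]
    simp

lemma ig_aux (a b : ℝ) (ha : 0 < a) (hb : 0 < b) :
    ∫ t in Set.Ioi (0 : ℝ), a / √t ^ 3 * Real.exp (-(b * √t + a / √t) ^ 2)
      = √π * Real.exp (-(4 * a * b)) := by
  obtain ⟨P, hP, htop, hbot⟩ := erf_aux
  set e := Real.exp (-(4 * a * b)) with he
  set G : ℝ → ℝ := fun t => e * P (b * √t - a / √t) - P (b * √t + a / √t) with hG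
  set F : ℝ → ℝ := fun t => if t ≤ 0 then e * (-(√π / 2)) - √π / 2 else G t with hF
  have hsT : Filter.Tendsto (fun t : ℝ => √t) Filter.atTop Filter.atTop :=
    Real.tendsto_sqrt_atTop
  have hs0 : Filter.Tendsto (fun t : ℝ => √t) (nhdsWithin 0 (Set.Ioi 0))
      (nhdsWithin 0 (Set.Ioi 0)) := by
    refine tendsto_nhdsWithin_of_tendsto_nhds_of_eventually_within _ ?_ ?_
    · have := (Real.continuous_sqrt.tendsto 0).mono_left
        (nhdsWithin_le_nhds (s := Set.Ioi (0 : ℝ)))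
      simpa using this
    · filter_upwards [self_mem_nhdsWithin] with t ht
      exact Real.sqrt_pos.2 ht
  have hbT : Filter.Tendsto (fun t : ℝ => b * √t) Filter.atTop Filter.atTop :=
    hsT.const_mul_atTop hb
  have haT : Filter.Tendsto (fun t : ℝ => a / √t) Filter.atTop (nhds 0) :=
    hsT.const_div_atTop a
  have hb0 : Filter.Tendsto (fun t : ℝ => b * √t) (nhdsWithin 0 (Set.Ioi 0)) (nhds 0) := by
    simpa using (hs0.mono_right nhdsWithin_le_nhds).const_mul b
  have ha0 : Filter.Tendsto (fun t : ℝ => a / √t) (nhdsWithin 0 (Set.Ioi 0)) Filter.atTop := by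
    simp only [div_eq_mul_inv]
    exact (tendsto_inv_nhdsGT_zero.comp hs0).const_mul_atTop ha
  have key := integral_Ioi_of_hasDerivAt_of_nonneg (a := (0 : ℝ)) (g := F)
    (g' := fun t => a / √t ^ 3 * Real.exp (-(b * √t + a / √t) ^ 2))
    (l := e * (√π / 2) - √π / 2) ?_ ?_ ?_ ?_
  · rw [key]
    simp only [hF, le_refl, if_true]
    ring
  · rw [← continuousWithinAt_Ioi_iff_Ici]
    have h1 : Filter.Tendsto G (nhdsWithin 0 (Set.Ioi 0)) (nhds (e * (-(√π / 2)) - √π / 2)) := by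
      refine Filter.Tendsto.sub (Filter.Tendsto.const_mul e (hbot.comp ?_)) (htop.comp ?_)
      · simp only [sub_eq_add_neg]
        exact hb0.add_atBot (Filter.tendsto_neg_atTop_atBot.comp ha0)
      · exact hb0.add_atTop ha0
    have : F 0 = e * (-(√π / 2)) - √π / 2 := by simp [hF]
    unfold ContinuousWithinAt
    rw [this]
    refine h1.congr' ?_
    filter_upwards [self_mem_nhdsWithin] with t ht
    simp only [hF, if_neg (not_le.2 (show (0 : ℝ) < t from ht))]
  · intro t ht
    have ht : 0 < t := ht
    have hs : 0 < √t := Real.sqrt_pos.2 ht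
    have hd := Real.hasDerivAt_sqrt ht.ne'
    have hm := hd.const_mul b
    have hdv := (hd.inv hs.ne').const_mul a
    have h1 := ((hP _).comp t (hm.sub hdv)).const_mul e
    have h2 := (hP _).comp t (hm.add hdv)
    have h3 := h1.sub h2
    have hee : e * Real.exp (-(b * √t - a * (√t)⁻¹) ^ 2)
        = Real.exp (-(b * √t + a * (√t)⁻¹) ^ 2) := by
      rw [he, ← Real.exp_add]
      congr 1
      field_simp
      ring
    have hGd : HasDerivAt G (a / √t ^ 3 * Real.exp (-(b * √t + a / √t) ^ 2)) t := by
      refine (h3.congr_deriv ?_)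
      simp only [Pi.sub_apply, Pi.add_apply, Pi.inv_apply]
      rw [← mul_assoc, hee, div_eq_mul_inv a (√t)]
      field_simp
      ring
    refine hGd.congr_of_eventuallyEq ?_
    filter_upwards [Ioi_mem_nhds ht] with u hu
    simp only [hF, if_neg (not_le.2 (show (0 : ℝ) < u from hu))]
  · intro t ht
    have ht : 0 < t := ht
    positivity
  · have h1 : Filter.Tendsto G Filter.atTop (nhds (e * (√π / 2) - √π / 2)) := by
      refine Filter.Tendsto.sub (Filter.Tendsto.const_mul e (htop.comp ?_)) (htop.comp ?_)
      · simp only [sub_eq_add_neg]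
        exact hbT.atTop_add haT.neg
      · exact hbT.atTop_add haT
    refine h1.congr' ?_
    filter_upwards [Filter.eventually_gt_atTop 0] with t ht
    simp only [hF, if_neg (not_le.2 (show (0 : ℝ) < t from ht))]

/-- When `μ c < 0`, the inverse Gaussian first-passage density is defective:
it integrates to `exp (2 μ c / σ²) < 1` over `(0, ∞)`. -/
theorem stmt4 (μ c σ : ℝ) (hc : c ≠ 0) (hσ : 0 < σ) (hμc : μ * c < 0) :
    (∫ t in Set.Ioi (0 : ℝ),
      |c| / (σ * Real.sqrt (2 * π * t ^ 3)) *
        Real.exp (-(μ * t - c) ^ 2 / (2 * σ ^ 2 * t)))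
      = Real.exp (2 * μ * c / σ ^ 2) ∧
    Real.exp (2 * μ * c / σ ^ 2) < 1 := by
  have hμ : μ ≠ 0 := by rintro rfl; simp at hμc
  have hc' : 0 < |c| := abs_pos.2 hc
  have hμ' : 0 < |μ| := abs_pos.2 hμ
  have h2 : 0 < √(2 : ℝ) := by positivity
  have h22 : √(2 : ℝ) ^ 2 = 2 := Real.sq_sqrt (by norm_num)
  have hp : 0 < √π := Real.sqrt_pos.2 Real.pi_pos
  have habs : |μ| * |c| = -(μ * c) := by rw [← abs_mul, abs_of_neg hμc]
  constructor
  · have h := ig_aux (|c| / (σ * √2)) (|μ| / (σ * √2)) (by positivity) (by positivity)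
    have e1 : -(4 * (|c| / (σ * √2)) * (|μ| / (σ * √2))) = 2 * μ * c / σ ^ 2 := by
      have : -(4 * (|c| / (σ * √2)) * (|μ| / (σ * √2)))
          = -4 * (|μ| * |c|) / (σ ^ 2 * √2 ^ 2) := by field_simp
      rw [this, habs, h22]
      field_simp
      ring
    rw [e1] at h
    have : Real.exp (2 * μ * c / σ ^ 2)
        = (√π)⁻¹ * (√π * Real.exp (2 * μ * c / σ ^ 2)) := by field_simp
    rw [this, ← h, ← integral_const_mul]
    refine setIntegral_congr_fun measurableSet_Ioi fun t ht => ?_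
    have ht : 0 < t := ht
    have hs : 0 < √t := Real.sqrt_pos.2 ht
    have hst : √t ^ 2 = t := Real.sq_sqrt ht.le
    have e2 : √(2 * π * t ^ 3) = √2 * √π * √t ^ 3 := by
      rw [Real.sqrt_eq_iff_mul_self_eq (by positivity) (by positivity)]
      have hpp : √π ^ 2 = π := Real.sq_sqrt Real.pi_pos.le
      symm
      calc _ = √2 ^ 2 * √π ^ 2 * (√t ^ 2) ^ 3 := by ring
        _ = _ := by rw [h22, hpp, hst]
    have e3 : -(μ * t - c) ^ 2 / (2 * σ ^ 2 * t)
        = -(|μ| / (σ * √2) * √t + |c| / (σ * √2) / √t) ^ 2 := by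
      have : -(|μ| / (σ * √2) * √t + |c| / (σ * √2) / √t) ^ 2
          = -(|μ| * √t ^ 2 + |c|) ^ 2 / (√2 ^ 2 * σ ^ 2 * √t ^ 2) := by
        field_simp
      rw [this, h22, hst]
      congr 2
      have q1 := sq_abs μ
      have q2 := sq_abs c
      linear_combination -t ^ 2 * q1 - q2 - 2 * t * habs
    rw [e2, e3]
    field_simp
  · rw [Real.exp_lt_one_iff]
    apply div_neg_of_neg_of_pos
    · linarith
    · positivity
end

section
/- Let c ≠ 0, σ > 0, and let Z be a standard normal random variable. Then the random variable c² / (σ²Z²) is almost surely well defined and its law is absolutely continuous with density t ↦ |c| / (σ√(2πt³)) · exp(−c² / (2σ²t)) on (0,∞) (and 0 on (−∞,0]); that is, c²/(σ²Z²) has the inverse Gaussian first-passage density with parameters μ = 0, c, σ. -/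
open MeasureTheory ProbabilityTheory Real

lemma aux_pt (c σ : ℝ) (hc : c ≠ 0) (hσ : 0 < σ) (z : ℝ) (hz : 0 < z) :
    |(-2 * c ^ 2 / (σ ^ 2 * z ^ 3))| * (|c| / (σ * Real.sqrt (2 * π * (c ^ 2 / (σ ^ 2 * z ^ 2)) ^ 3))
      * Real.exp (-c ^ 2 / (2 * σ ^ 2 * (c ^ 2 / (σ ^ 2 * z ^ 2))))) = 2 * gaussianPDFReal 0 1 z := by
  have hc' : 0 < |c| := abs_pos.mpr hc
  have h1 : Real.sqrt (2 * π * (c ^ 2 / (σ ^ 2 * z ^ 2)) ^ 3)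
      = Real.sqrt (2 * π) * (|c| / (σ * z)) ^ 3 := by
    rw [Real.sqrt_mul (by positivity)]
    congr 1
    rw [Real.sqrt_eq_iff_mul_self_eq (by positivity) (by positivity), ← sq_abs c]
    field_simp
  have h2 : -c ^ 2 / (2 * σ ^ 2 * (c ^ 2 / (σ ^ 2 * z ^ 2))) = - z ^ 2 / 2 := by
    field_simp
  have h3 : |(-2 * c ^ 2 / (σ ^ 2 * z ^ 3))| = 2 * |c| ^ 2 / (σ ^ 2 * z ^ 3) := by
    rw [abs_div, abs_mul, abs_of_pos (show 0 < σ ^ 2 * z ^ 3 by positivity), abs_pow]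
    norm_num
  have h4 : 0 < Real.sqrt (2 * π) := by positivity
  rw [h1, h2, h3, gaussianPDFReal]
  simp only [NNReal.coe_one, mul_one, sub_zero]
  field_simp

lemma aux_even (F : ℝ → ENNReal) (hF : ∀ x, F (-x) = F x) :
    ∫⁻ x, F x = ∫⁻ x in Set.Ioi 0, 2 * F x := by
  have h1 : ∫⁻ x in Set.Iio 0, F x = ∫⁻ x in Set.Ioi 0, F x := by
    have := (Measure.measurePreserving_neg (volume : Measure ℝ)).setLIntegral_comp_preimage_emb
      (MeasurableEquiv.neg ℝ).measurableEmbedding F (Set.Iio 0)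
    rw [← this]
    simp [hF]
  rw [lintegral_const_mul' _ _ (by simp), two_mul]
  nth_rewrite 1 [← h1]
  rw [← lintegral_add_compl F (measurableSet_Iio (a := (0:ℝ))), Set.compl_Iio,
    setLIntegral_congr Ioi_ae_eq_Ici]

lemma aux_image (c σ : ℝ) (hc : c ≠ 0) (hσ : 0 < σ) :
    (fun z : ℝ => c ^ 2 / (σ ^ 2 * z ^ 2)) '' Set.Ioi 0 = Set.Ioi 0 := by
  ext t
  constructor
  · rintro ⟨z, hz, rfl⟩
    have hz : 0 < z := hz
    have : 0 < c ^ 2 := by positivity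
    rw [Set.mem_Ioi]
    positivity
  · intro ht
    have ht : 0 < t := ht
    have hc' : 0 < |c| := abs_pos.mpr hc
    refine ⟨|c| / (σ * √t), ?_, ?_⟩
    · rw [Set.mem_Ioi]
      positivity
    · simp only [div_pow, mul_pow, sq_abs, Real.sq_sqrt ht.le]
      field_simp

theorem aux_main_s5 (c σ : ℝ) (hc : c ≠ 0) (hσ : 0 < σ) :
    Measure.map (fun z => c ^ 2 / (σ ^ 2 * z ^ 2)) (gaussianReal 0 1)
      = volume.withDensity (fun t =>
        ENNReal.ofReal (if 0 < t then
          |c| / (σ * Real.sqrt (2 * π * t ^ 3)) * Real.exp (-c ^ 2 / (2 * σ ^ 2 * t))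
        else 0)) := by
  have hg : Measurable (fun z : ℝ => c ^ 2 / (σ ^ 2 * z ^ 2)) := by fun_prop
  ext A hA
  rw [Measure.map_apply hg hA, withDensity_apply _ hA, gaussianReal_apply _ one_ne_zero,
    ← lintegral_indicator (hg hA), ← lintegral_indicator hA, aux_even]
  swap
  · intro x
    have h1 : gaussianPDF 0 1 (-x) = gaussianPDF 0 1 x := by
      simp [gaussianPDF, gaussianPDFReal]
    have h2 : (-x ∈ (fun z : ℝ => c ^ 2 / (σ ^ 2 * z ^ 2)) ⁻¹' A)
        = (x ∈ (fun z : ℝ => c ^ 2 / (σ ^ 2 * z ^ 2)) ⁻¹' A) := by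
      simp only [Set.mem_preimage, neg_sq]
    by_cases h3 : x ∈ (fun z : ℝ => c ^ 2 / (σ ^ 2 * z ^ 2)) ⁻¹' A
    · rw [Set.indicator_of_mem h3, Set.indicator_of_mem (h2.mpr h3), h1]
    · rw [Set.indicator_of_notMem h3, Set.indicator_of_notMem (fun h => h3 (h2.mp h))]
  set f : ℝ → ENNReal := fun t =>
        ENNReal.ofReal (if 0 < t then
          |c| / (σ * Real.sqrt (2 * π * t ^ 3)) * Real.exp (-c ^ 2 / (2 * σ ^ 2 * t))
        else 0) with hf
  have e : ∫⁻ t, A.indicator f t = ∫⁻ t in Set.Ioi 0, A.indicator f t := by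
    rw [← lintegral_indicator measurableSet_Ioi]
    congr 1
    ext t
    by_cases ht : 0 < t <;> simp [Set.indicator, ht, hf]
  rw [e]
  conv_rhs => rw [← aux_image c σ hc hσ]
  rw [lintegral_image_eq_lintegral_abs_deriv_mul measurableSet_Ioi
    (f' := fun z => -2 * c ^ 2 / (σ ^ 2 * z ^ 3))]
  · refine setLIntegral_congr_fun measurableSet_Ioi ?_
    intro z hz
    have hz : 0 < z := hz
    have ht : 0 < c ^ 2 / (σ ^ 2 * z ^ 2) := by positivity
    by_cases hzA : c ^ 2 / (σ ^ 2 * z ^ 2) ∈ A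
    · simp only [Set.indicator, Set.mem_preimage, hzA, if_true, hf, ht]
      rw [← ENNReal.ofReal_mul (abs_nonneg _), aux_pt c σ hc hσ z hz, gaussianPDF,
        ENNReal.ofReal_mul (by norm_num)]
      simp
    · simp [Set.indicator, hzA]
  · intro z hz
    have hz : 0 < z := hz
    have h := (((hasDerivAt_pow 2 z).const_mul (σ ^ 2)).fun_inv (by positivity)).const_mul (c ^ 2)
    simp only [← div_eq_mul_inv] at h
    refine (h.congr_deriv ?_).hasDerivWithinAt
    push_cast
    field_simp
  · intro x hx y hy hxy
    have hx : 0 < x := hx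
    have hy : 0 < y := hy
    simp only at hxy
    field_simp at hxy
    have h : (x - y) * (x + y) = 0 := by linarith
    rcases mul_eq_zero.mp h with h | h <;> linarith

theorem stmt5 {Ω : Type*} [MeasurableSpace Ω] (P : Measure Ω) [IsProbabilityMeasure P]
    (c σ : ℝ) (hc : c ≠ 0) (hσ : 0 < σ)
    (Z : Ω → ℝ) (hZm : Measurable Z) (hZ : Measure.map Z P = gaussianReal 0 1) :
    (∀ᵐ ω ∂P, Z ω ≠ 0) ∧
    Measure.map (fun ω => c ^ 2 / (σ ^ 2 * (Z ω) ^ 2)) P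
      = volume.withDensity (fun t =>
        ENNReal.ofReal (if 0 < t then
          |c| / (σ * Real.sqrt (2 * π * t ^ 3)) * Real.exp (-c ^ 2 / (2 * σ ^ 2 * t))
        else 0)) := by
  constructor
  · have h : ∀ᵐ x ∂(Measure.map Z P), x ≠ 0 := by
      rw [hZ]
      have := nullSingletonClass_gaussianReal (μ := 0) (v := 1) one_ne_zero
      exact Measure.ae_ne _ _
    exact ae_of_ae_map hZm.aemeasurable h
  · rw [← aux_main_s5 c σ hc hσ, ← hZ, Measure.map_map (by fun_prop) hZm]
    rfl
end

section
/- Let N ≥ 1 and for each i ∈ {1,…,N} let μᵢ ≠ 0, cᵢ ≠ 0, σᵢ > 0 with μᵢcᵢ > 0, and set Hᵢ(t) = (μᵢt − cᵢ)² / (σᵢ²t). Let T = (T₁,…,T_N) be a random vector with values in (0,∞)^N whose law has a continuous, strictly positive density f on (0,∞)^N with respect to Lebesgue measure. For each i set Vᵢ = Hᵢ(Tᵢ), X_{i1} = cᵢ/μᵢ + σᵢ²Vᵢ/(2μᵢ²) − (σᵢ√Vᵢ/(2μᵢ²))·√(4μᵢcᵢ + σᵢ²Vᵢ) and X_{i2}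 = cᵢ² / (μᵢ²X_{i1}). For u = (u₁,…,u_N) ∈ {1,2}^N let a_u = f(X_{1u₁},…,X_{Nu_N}) · ∏ᵢ |Hᵢ′(X_{iu_i})|⁻¹ and p_u = a_u / Σ_{v∈{1,2}^N} a_v (these are almost surely well defined). Fix an enumeration u⁽¹⁾,…,u⁽²^N⁾ of {1,2}^N and let I_{u⁽ᵏ⁾} = [Σ_{j<k} p_{u⁽ʲ⁾}, Σ_{j≤k} p_{u⁽ʲ⁾}). Let U be uniform on [0,1] and independent of T. Then the random vector Σ_{u∈{1,2}^N} (X_{1u₁},…,X_{Nu_N}) · 1{U ∈ I_u} has the same distribution as T. -/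
open MeasureTheory ProbabilityTheory Real

noncomputable def RR {N : ℕ} (d : Fin N → ℝ) (s : Fin N → Fin 2) (t : Fin N → ℝ) : Fin N → ℝ :=
  fun i => if s i = 0 then t i else d i ^ 2 / t i

def OO (N : ℕ) : Set (Fin N → ℝ) := {t | ∀ i, 0 < t i}

lemma OO_meas (N : ℕ) : MeasurableSet (OO N) := by
  have : OO N = ⋂ i, {t : Fin N → ℝ | 0 < t i} := by ext; simp [OO]
  rw [this]
  exact MeasurableSet.iInter fun i => measurableSet_lt measurable_const (measurable_pi_apply i)

lemma RR_mem {N : ℕ} {d : Fin N → ℝ} (hd : ∀ i, 0 < d i) (s : Fin N → Fin 2) {t : Fin N → ℝ}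
    (ht : t ∈ OO N) : RR d s t ∈ OO N := by
  intro i
  have := hd i
  have := ht i
  unfold RR
  split_ifs <;> positivity

lemma RR_comp {N : ℕ} {d : Fin N → ℝ} (hd : ∀ i, 0 < d i) (s s' : Fin N → Fin 2) {t : Fin N → ℝ}
    (ht : t ∈ OO N) : RR d s' (RR d s t) = RR d (s' + s) t := by
  funext i
  have h1 := (hd i).ne'
  have h2 := (ht i).ne'
  simp only [RR, Pi.add_apply]
  have h01 : ∀ x : Fin 2, x = 0 ∨ x = 1 := by decide
  rcases h01 (s i) with h | h <;> rcases h01 (s' i) with h' | h' <;> simp [h, h']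
  field_simp

lemma RR_invol {N : ℕ} {d : Fin N → ℝ} (hd : ∀ i, 0 < d i) (s : Fin N → Fin 2) {t : Fin N → ℝ}
    (ht : t ∈ OO N) : RR d s (RR d s t) = t := by
  rw [RR_comp hd s s ht]
  funext i
  have : ∀ x : Fin 2, x + x = 0 := by decide
  simp [RR, this]

lemma RR_meas {N : ℕ} (d : Fin N → ℝ) (s : Fin N → Fin 2) : Measurable (RR d s) := by
  refine measurable_pi_lambda _ fun i => ?_
  unfold RR
  split_ifs <;> fun_prop

lemma RR_sum {N : ℕ} {d : Fin N → ℝ} (hd : ∀ i, 0 < d i) (s : Fin N → Fin 2) {t : Fin N → ℝ}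
    (ht : t ∈ OO N) (φ : (Fin N → ℝ) → ℝ) :
    ∑ s', φ (RR d s' (RR d s t)) = ∑ s', φ (RR d s' t) := by
  simp_rw [RR_comp hd s _ ht]
  exact Fintype.sum_equiv (Equiv.addRight s) _ _ (fun _ => rfl)

lemma RR_cov {N : ℕ} {d : Fin N → ℝ} (hd : ∀ i, 0 < d i) (s : Fin N → Fin 2)
    (G : (Fin N → ℝ) → ENNReal) :
    ∫⁻ t in OO N, G t = ∫⁻ t in OO N, ENNReal.ofReal ((∏ i, RR d s t i) / ∏ i, t i) * G (RR d s t) := by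
  let k : (Fin N → ℝ) → Fin N → ℝ := fun t i => if s i = 0 then 1 else - (d i ^ 2 / t i ^ 2)
  let D : (Fin N → ℝ) → ((Fin N → ℝ) →L[ℝ] (Fin N → ℝ)) := fun t =>
    ContinuousLinearMap.pi fun i => k t i • ContinuousLinearMap.proj i
  have hder : ∀ t ∈ OO N, HasFDerivWithinAt (RR d s) (D t) (OO N) t := by
    intro t ht
    refine HasFDerivAt.hasFDerivWithinAt ?_
    rw [hasFDerivAt_pi']
    intro i
    have hp : HasFDerivAt (fun t : Fin N → ℝ => t i) (ContinuousLinearMap.proj (R := ℝ) (φ := fun _ : Fin N => ℝ) i) t :=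
      hasFDerivAt_apply i t
    have hk : HasDerivAt (fun x : ℝ => if s i = 0 then x else d i ^ 2 / x) (k t i) (t i) := by
      simp only [k]
      split_ifs
      · exact hasDerivAt_id _
      · have := ((hasDerivAt_inv (ht i).ne').const_mul (d i ^ 2))
        simpa [div_eq_mul_inv] using this
    exact hk.comp_hasFDerivAt t hp
  have hinj : Set.InjOn (RR d s) (OO N) := by
    intro x hx y hy hxy
    rw [← RR_invol hd s hx, hxy, RR_invol hd s hy]
  have him : RR d s '' OO N = OO N := by
    ext y; constructor
    · rintro ⟨x, hx, rfl⟩; exact RR_mem hd s hx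
    · intro hy; exact ⟨_, RR_mem hd s hy, RR_invol hd s hy⟩
  have key := lintegral_image_eq_lintegral_abs_det_fderiv_mul volume (OO_meas N) hder hinj G
  rw [him] at key
  rw [key]
  refine setLIntegral_congr_fun (OO_meas N) fun t ht => ?_
  have hdet : (D t).det = ∏ i, k t i := by
    have : (D t : (Fin N → ℝ) →ₗ[ℝ] (Fin N → ℝ)) = Matrix.toLin' (Matrix.diagonal (k t)) := by
      refine LinearMap.ext fun v => ?_
      funext i
      simp [D, Matrix.mulVec_diagonal]
    rw [ContinuousLinearMap.det, this, LinearMap.det_toLin', Matrix.det_diagonal]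
  rw [hdet, Finset.abs_prod, ← Finset.prod_div_distrib]
  congr 2
  refine Finset.prod_congr rfl fun i _ => ?_
  have h1 := ht i
  have h2 := hd i
  simp only [k, RR]
  split_ifs
  · simp [h1.ne']
  · rw [abs_neg, abs_of_pos (by positivity)]
    field_simp

/-- roots -/
lemma roots {μ c σ t : ℝ} (hσ : 0 < σ) (hμc : 0 < μ * c) (ht : 0 < t) {V : ℝ}
    (hV : V = (μ * t - c) ^ 2 / (σ ^ 2 * t)) :
    c / μ + σ ^ 2 * V / (2 * μ ^ 2) - (σ * √V / (2 * μ ^ 2)) * √(4 * μ * c + σ ^ 2 * V)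
      = min t ((c / μ) ^ 2 / t) := by
  have hμ : μ ≠ 0 := by rintro rfl; simp at hμc
  have h1 : σ * √V = |μ * t - c| / √t := by
    rw [hV, Real.sqrt_div (sq_nonneg _), Real.sqrt_sq_eq_abs, Real.sqrt_mul (sq_nonneg _),
      Real.sqrt_sq hσ.le]
    field_simp
  have h2 : √(4 * μ * c + σ ^ 2 * V) = |μ * t + c| / √t := by
    have : 4 * μ * c + σ ^ 2 * V = (μ * t + c) ^ 2 / t := by
      rw [hV]; field_simp; ring
    rw [this, Real.sqrt_div (sq_nonneg _), Real.sqrt_sq_eq_abs]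
  have h3 : (σ * √V / (2 * μ ^ 2)) * √(4 * μ * c + σ ^ 2 * V)
      = |(μ * t - c) * (μ * t + c)| / (2 * μ ^ 2 * t) := by
    rw [h1, h2, abs_mul]
    have := Real.mul_self_sqrt ht.le
    have h0 : √t ≠ 0 := (Real.sqrt_pos.2 ht).ne'
    field_simp
    rw [Real.sq_sqrt ht.le]
    ring
  have hmin : ∀ a b : ℝ, min a b = (a + b - |a - b|) / 2 := by
    intro a b
    rcases le_total a b with h | h
    · rw [min_eq_left h, abs_of_nonpos (by linarith)]; ring
    · rw [min_eq_right h, abs_of_nonneg (by linarith)]; ring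
  rw [h3, hV, hmin]
  have : t - (c / μ) ^ 2 / t = ((μ * t - c) * (μ * t + c)) / (μ ^ 2 * t) := by
    field_simp; ring
  rw [this, abs_div, abs_of_pos (show 0 < μ ^ 2 * t by positivity)]
  field_simp
  ring

lemma interval_lemma {n : ℕ} (p : Fin n → ℝ) (hp : ∀ k, 0 ≤ p k) (hs : ∑ k, p k = 1)
    (L : Fin n → ℝ) (hL : ∀ k, L k = ∑ j ∈ Finset.univ.filter (fun j => j < k), p j)
    {N : ℕ} (x : Fin n → Fin N → ℝ) (A : Set (Fin N → ℝ)) (hA : MeasurableSet A) :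
    (volume.restrict (Set.Icc (0:ℝ) 1)) {u | (fun i => ∑ k, if u ∈ Set.Ico (L k) (L k + p k)
        then x k i else 0) ∈ A}
      = ∑ k, ENNReal.ofReal (p k) * A.indicator 1 (x k) := by
  set I : Fin n → Set ℝ := fun k => Set.Ico (L k) (L k + p k) with hI
  have hmono : ∀ j k, j < k → L j + p j ≤ L k := by
    intro j k hjk
    rw [hL, hL]
    have : ∑ i ∈ Finset.univ.filter (fun i => i < j), p i + p j
        = ∑ i ∈ insert j (Finset.univ.filter (fun i => i < j)), p i := by
      rw [Finset.sum_insert (by simp)]; ring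
    rw [this]
    refine Finset.sum_le_sum_of_subset_of_nonneg ?_ fun _ _ _ => hp _
    intro i hi
    simp at hi ⊢
    rcases hi with rfl | hi
    · exact hjk
    · exact hi.trans hjk
  have hdis : Pairwise (Function.onFun Disjoint I) := by
    have aux : ∀ j k, j < k → Disjoint (I j) (I k) := by
      intro j k hjk
      rw [Set.disjoint_left]
      intro u hu hu'
      exact absurd (hu.2.trans_le (hmono j k hjk)) (not_lt.2 hu'.1)
    intro j k hjk
    rcases lt_or_gt_of_ne hjk with h | h
    · exact aux _ _ h
    · exact (aux _ _ h).symm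
  have hsub : (⋃ k, I k) ⊆ Set.Icc (0:ℝ) 1 := by
    refine Set.iUnion_subset fun k u hu => ⟨le_trans ?_ hu.1, hu.2.le.trans ?_⟩
    · rw [hL]; exact Finset.sum_nonneg fun _ _ => hp _
    · rw [hL, ← hs]
      have : ∑ i ∈ Finset.univ.filter (fun i => i < k), p i + p k
        = ∑ i ∈ insert k (Finset.univ.filter (fun i => i < k)), p i := by
        rw [Finset.sum_insert (by simp)]; ring
      rw [this]
      exact Finset.sum_le_sum_of_subset_of_nonneg (Finset.subset_univ _) fun _ _ _ => hp _
  have hIm : ∀ k, MeasurableSet (I k) := fun k => measurableSet_Ico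
  have hvolI : ∀ k, volume (I k) = ENNReal.ofReal (p k) := by
    intro k; simp [hI]
  have hae : (⋃ k, I k) =ᵐ[volume] Set.Icc (0:ℝ) 1 := by
    refine ae_eq_of_subset_of_measure_ge hsub ?_ (MeasurableSet.iUnion hIm).nullMeasurableSet (by simp)
    rw [measure_iUnion hdis hIm, tsum_fintype]
    simp_rw [hvolI]
    rw [← ENNReal.ofReal_sum_of_nonneg fun _ _ => hp _, hs]
    simp
  have hm : MeasurableSet {u | (fun i => ∑ k, if u ∈ I k then x k i else 0) ∈ A} := by
    have : Measurable fun u : ℝ => (fun i => ∑ k, if u ∈ I k then x k i else 0) := by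
      refine measurable_pi_lambda _ fun i => Finset.measurable_sum _ fun k _ => ?_
      exact Measurable.ite (hIm k) measurable_const measurable_const
    exact this hA
  rw [← Measure.restrict_congr_set hae, Measure.restrict_iUnion hdis hIm,
    Measure.sum_apply _ hm, tsum_fintype]
  refine Finset.sum_congr rfl fun k _ => ?_
  rw [Measure.restrict_apply hm, ← hvolI]
  have hval : ∀ u ∈ I k, (fun i => ∑ k, if u ∈ I k then x k i else 0) = x k := by
    intro u hu
    funext i
    rw [Finset.sum_eq_single k]
    · simp [hu]
    · intro j _ hj
      have := Set.disjoint_left.1 (hdis hj)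
      rw [if_neg fun h => this h hu]
    · simp
  by_cases hx : x k ∈ A
  · have : {u | (fun i => ∑ k, if u ∈ I k then x k i else 0) ∈ A} ∩ I k = I k := by
      ext u
      constructor
      · exact fun h => h.2
      · intro h; refine ⟨?_, h⟩
        simp only [Set.mem_ofPred_eq]
        rw [hval u h]; exact hx
    rw [this]; simp [hx]
  · have : {u | (fun i => ∑ k, if u ∈ I k then x k i else 0) ∈ A} ∩ I k = ∅ := by
      ext u
      constructor
      · rintro ⟨h1, h⟩
        simp only [Set.mem_ofPred_eq] at h1
        rw [hval u h] at h1; exact hx h1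
      · simp
    rw [this]; simp [hx]

lemma choice_lemma {N : ℕ} {d : Fin N → ℝ} (t : Fin N → ℝ)
    (x : Fin N → Fin 2 → ℝ) (hx0 : ∀ i, x i 0 = min (t i) (d i ^ 2 / t i))
    (hx1 : ∀ i, x i 1 = max (t i) (d i ^ 2 / t i)) :
    ∃ ε : (Fin N → Fin 2) ≃ (Fin N → Fin 2), ∀ u, (fun i => x i (u i)) = RR d (ε u) t := by
  classical
  refine ⟨Equiv.piCongrRight fun i => if t i ≤ d i ^ 2 / t i then Equiv.refl _
    else Equiv.swap 0 1, fun u => ?_⟩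
  funext i
  have h01 : ∀ x : Fin 2, x = 0 ∨ x = 1 := by decide
  simp only [RR, Equiv.piCongrRight_apply, Pi.map_apply]
  by_cases h : t i ≤ d i ^ 2 / t i
  · rcases h01 (u i) with h' | h' <;> simp [h, h', hx0, hx1]
  · rcases h01 (u i) with h' | h' <;> simp [h, h', hx0, hx1, (not_le.1 h).le]

lemma key_integral {N : ℕ} {d : Fin N → ℝ} (hd : ∀ i, 0 < d i) (f : (Fin N → ℝ) → ℝ)
    (hfm : Measurable f)
    (hfpos : ∀ t ∈ OO N, 0 < f t) (g : (Fin N → ℝ) → ENNReal) (hg : Measurable g)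
    (h S : (Fin N → ℝ) → ℝ) (hh : h = fun t => f t * ∏ i, t i) (hS : S = fun t => ∑ s, h (RR d s t)) :
    ∫⁻ t in OO N, ENNReal.ofReal (f t) * ∑ s, ENNReal.ofReal (h (RR d s t) / S t) * g (RR d s t)
      = ∫⁻ t in OO N, ENNReal.ofReal (f t) * g t := by
  have hhm : Measurable h := by
    rw [hh]
    exact hfm.mul (Finset.measurable_prod _ fun i _ => measurable_pi_apply i)
  have hSm : Measurable S := by
    rw [hS]
    exact Finset.measurable_sum _ fun s _ => hhm.comp (RR_meas d s)
  have hw : ∀ t ∈ OO N, 0 < ∏ i, t i := fun t ht => Finset.prod_pos fun i _ => ht i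
  have hhpos : ∀ t ∈ OO N, 0 < h t := by
    intro t ht
    rw [hh]
    exact mul_pos (hfpos t ht) (hw t ht)
  have hSpos : ∀ t ∈ OO N, 0 < S t := by
    intro t ht
    rw [hS]
    exact Finset.sum_pos (fun s _ => hhpos _ (RR_mem hd s ht)) Finset.univ_nonempty
  have hSinv : ∀ s, ∀ t ∈ OO N, S (RR d s t) = S t := by
    intro s t ht
    rw [hS]
    exact RR_sum hd s ht h
  have hterm : ∀ s, ∫⁻ t in OO N, ENNReal.ofReal (f t) *
        (ENNReal.ofReal (h (RR d s t) / S t) * g (RR d s t))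
      = ∫⁻ t in OO N, ENNReal.ofReal (f t * (h (RR d s t) / S t)) * g t := by
    intro s
    conv_rhs => rw [RR_cov hd s]
    refine setLIntegral_congr_fun (OO_meas N) fun t ht => ?_
    have hr := RR_mem hd s ht
    have e1 := hw t ht
    have e2 := hw _ hr
    have e3 := hSpos t ht
    have e4 := hhpos t ht
    have e5 := hfpos t ht
    have e6 := hfpos _ hr
    have e7 := hhpos _ hr
    beta_reduce
    rw [hSinv s t ht, RR_invol hd s ht, ← mul_assoc, ← mul_assoc, ← ENNReal.ofReal_mul e5.le,
      ← ENNReal.ofReal_mul (by positivity)]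
    congr 2
    have a1 : h t = f t * ∏ i, t i := by rw [hh]
    have a2 : h (RR d s t) = f (RR d s t) * ∏ i, RR d s t i := by rw [hh]
    rw [a1, a2]
    field_simp
  have hm1 : ∀ s, Measurable fun t => ENNReal.ofReal (h (RR d s t) / S t) := fun s =>
    ((hhm.comp (RR_meas d s)).div hSm).ennreal_ofReal
  simp_rw [Finset.mul_sum]
  have M1 : ∀ s ∈ (Finset.univ : Finset (Fin N → Fin 2)), Measurable fun t =>
      ENNReal.ofReal (f t) * (ENNReal.ofReal (h (RR d s t) / S t) * g (RR d s t)) :=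
    fun s _ => hfm.ennreal_ofReal.mul ((hm1 s).mul (hg.comp (RR_meas d s)))
  have M2 : ∀ s ∈ (Finset.univ : Finset (Fin N → Fin 2)), Measurable fun t =>
      ENNReal.ofReal (f t * (h (RR d s t) / S t)) * g t :=
    fun s _ => (hfm.mul ((hhm.comp (RR_meas d s)).div hSm)).ennreal_ofReal.mul hg
  rw [lintegral_finsetSum _ M1]
  simp_rw [hterm]
  rw [← lintegral_finsetSum _ M2]
  refine setLIntegral_congr_fun (OO_meas N) fun t ht => ?_
  beta_reduce
  rw [← Finset.sum_mul, ← ENNReal.ofReal_sum_of_nonneg]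
  · congr 2
    rw [← Finset.mul_sum, ← Finset.sum_div]
    have : ∑ s, h (RR d s t) = S t := by rw [hS]
    rw [this, div_self (hSpos t ht).ne', mul_one]
  · intro s _
    have := hfpos t ht
    have := hhpos _ (RR_mem hd s ht)
    have := hSpos t ht
    positivity

lemma weight_lemma {μ c σ t : ℝ} (hσ : 0 < σ) (hμ : μ ≠ 0) (hc : c ≠ 0) (ht : 0 < t) (x : ℝ)
    (hx : x = t ∨ x = (c / μ) ^ 2 / t) :
    |(μ ^ 2 * x ^ 2 - c ^ 2) / (σ ^ 2 * x ^ 2)|⁻¹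
      = x * (|μ ^ 2 * t ^ 2 - c ^ 2| / (σ ^ 2 * t))⁻¹ := by
  rcases hx with rfl | rfl
  · rw [abs_div, abs_of_pos (show 0 < σ ^ 2 * x ^ 2 by positivity), inv_div, inv_div]
    field_simp
  · have : μ ^ 2 * ((c / μ) ^ 2 / t) ^ 2 - c ^ 2
        = - ((c ^ 2 / (μ ^ 2 * t ^ 2)) * (μ ^ 2 * t ^ 2 - c ^ 2)) := by
      field_simp; ring
    have hp : 0 < c ^ 2 / (μ ^ 2 * t ^ 2) := by positivity
    have hp' : 0 < σ ^ 2 * ((c / μ) ^ 2 / t) ^ 2 := by positivity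
    rw [abs_div, abs_of_pos hp', this, abs_neg, abs_mul, abs_of_pos hp, inv_div, inv_div]
    field_simp

/-- Multiple-roots transformation in `N` dimensions: let `T = (T₁,…,T_N)` be a random
vector with values in `(0,∞)^N` whose law has a continuous strictly positive density `f`
on the open orthant, for each `i` set `Vᵢ = Hᵢ(Tᵢ)` with `Hᵢ(t) = (μᵢ t − cᵢ)²/(σᵢ² t)`
(where `μᵢ ≠ 0`, `cᵢ ≠ 0`, `σᵢ > 0`, `μᵢ cᵢ > 0`), let `X_{i1}, X_{i2}` be the two roots
of `Hᵢ = Vᵢ`, and for `u ∈ {1,2}^N` set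
`a_u = f(X_{1u₁},…,X_{Nu_N}) ∏ᵢ |Hᵢ′(X_{iu_i})|⁻¹` and `p_u = a_u / Σ_v a_v`.
Fix an enumeration of `{1,2}^N` with associated partition of `[0,1)` into intervals
`I_u` of lengths `p_u`.  If `U` is uniform on `[0,1]` and independent of `T`, then
`Σ_u (X_{1u₁},…,X_{Nu_N}) 1{U ∈ I_u}` has the same distribution as `T`. -/
theorem stmt10 {Ω : Type*} [MeasurableSpace Ω] (P : Measure Ω) [IsProbabilityMeasure P]
    (N : ℕ) (hN : 1 ≤ N) (μ c σ : Fin N → ℝ)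
    (hμ : ∀ i, μ i ≠ 0) (hc : ∀ i, c i ≠ 0) (hσ : ∀ i, 0 < σ i)
    (hμc : ∀ i, 0 < μ i * c i)
    (T : Ω → Fin N → ℝ) (hTm : Measurable T)
    (hTpos : ∀ᵐ ω ∂P, ∀ i, 0 < T ω i)
    (f : (Fin N → ℝ) → ℝ)
    (hfcont : ContinuousOn f {t : Fin N → ℝ | ∀ i, 0 < t i})
    (hfpos : ∀ t : Fin N → ℝ, (∀ i, 0 < t i) → 0 < f t)
    (hfzero : ∀ t : Fin N → ℝ, ¬ (∀ i, 0 < t i) → f t = 0)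
    (hlaw : Measure.map T P = volume.withDensity fun t => ENNReal.ofReal (f t))
    (V : Ω → Fin N → ℝ)
    (hV : ∀ ω i, V ω i = (μ i * T ω i - c i) ^ 2 / ((σ i) ^ 2 * T ω i))
    (X : Ω → Fin N → Fin 2 → ℝ)
    (hX1 : ∀ ω i, X ω i 0 = c i / μ i + (σ i) ^ 2 * V ω i / (2 * (μ i) ^ 2)
      - (σ i * Real.sqrt (V ω i) / (2 * (μ i) ^ 2))
        * Real.sqrt (4 * μ i * c i + (σ i) ^ 2 * V ω i))
    (hX2 : ∀ ω i, X ω i 1 = (c i) ^ 2 / ((μ i) ^ 2 * X ω i 0))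
    (H' : Fin N → ℝ → ℝ)
    (hH' : ∀ i x, H' i x = ((μ i) ^ 2 * x ^ 2 - (c i) ^ 2) / ((σ i) ^ 2 * x ^ 2))
    (a : (Fin N → Fin 2) → Ω → ℝ)
    (ha : ∀ u ω, a u ω = f (fun i => X ω i (u i)) * ∏ i, |H' i (X ω i (u i))|⁻¹)
    (p : (Fin N → Fin 2) → Ω → ℝ)
    (hp : ∀ u ω, p u ω = a u ω / ∑ v : Fin N → Fin 2, a v ω)
    (e : Fin (2 ^ N) ≃ (Fin N → Fin 2))
    (L : Fin (2 ^ N) → Ω → ℝ)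
    (hL : ∀ k ω, L k ω = ∑ j ∈ Finset.univ.filter (fun j : Fin (2 ^ N) => j < k), p (e j) ω)
    (U : Ω → ℝ) (hUm : Measurable U)
    (hU : Measure.map U P = volume.restrict (Set.Icc (0 : ℝ) 1))
    (hindep : IndepFun U T P)
    (Y : Ω → Fin N → ℝ)
    (hY : ∀ ω i, Y ω i = ∑ k : Fin (2 ^ N),
      (if U ω ∈ Set.Ico (L k ω) (L k ω + p (e k) ω) then X ω i (e k i) else 0)) :
    Measure.map Y P = Measure.map T P := by
  classical
  -- functions on `t`-space
  let Vt : (Fin N → ℝ) → Fin N → ℝ := fun t i => (μ i * t i - c i) ^ 2 / ((σ i) ^ 2 * t i)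
  let Zt : (Fin N → ℝ) → Fin N → ℝ := fun t i => c i / μ i + (σ i) ^ 2 * Vt t i / (2 * (μ i) ^ 2)
      - (σ i * Real.sqrt (Vt t i) / (2 * (μ i) ^ 2))
        * Real.sqrt (4 * μ i * c i + (σ i) ^ 2 * Vt t i)
  let Xt : (Fin N → ℝ) → Fin N → Fin 2 → ℝ := fun t i j =>
    if j = 0 then Zt t i else (c i) ^ 2 / ((μ i) ^ 2 * Zt t i)
  let Ht : Fin N → ℝ → ℝ := fun i x => ((μ i) ^ 2 * x ^ 2 - (c i) ^ 2) / ((σ i) ^ 2 * x ^ 2)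
  let at' : (Fin N → Fin 2) → (Fin N → ℝ) → ℝ := fun u t =>
    f (fun i => Xt t i (u i)) * ∏ i, |Ht i (Xt t i (u i))|⁻¹
  let pt : (Fin N → Fin 2) → (Fin N → ℝ) → ℝ := fun u t => at' u t / ∑ v : Fin N → Fin 2, at' v t
  let Lt : Fin (2 ^ N) → (Fin N → ℝ) → ℝ := fun k t =>
    ∑ j ∈ Finset.univ.filter (fun j : Fin (2 ^ N) => j < k), pt (e j) t
  let Φ : ℝ × (Fin N → ℝ) → Fin N → ℝ := fun z i => ∑ k : Fin (2 ^ N),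
      (if z.1 ∈ Set.Ico (Lt k z.2) (Lt k z.2 + pt (e k) z.2) then Xt z.2 i (e k i) else 0)
  have h01 : ∀ x : Fin 2, x = 0 ∨ x = 1 := by decide
  have hVe : ∀ ω i, V ω i = Vt (T ω) i := hV
  have hX0e : ∀ ω i, X ω i 0 = Zt (T ω) i := by
    intro ω i
    rw [hX1, hVe]
  have hXe : ∀ ω i j, X ω i j = Xt (T ω) i j := by
    intro ω i j
    rcases h01 j with rfl | rfl
    · rw [hX0e]; simp [Xt]
    · rw [hX2, hX0e]; simp [Xt]
  have hae : ∀ u ω, a u ω = at' u (T ω) := by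
    intro u ω
    rw [ha]
    simp_rw [hXe, hH']
    rfl
  have hpe : ∀ u ω, p u ω = pt u (T ω) := by
    intro u ω
    rw [hp]
    simp_rw [hae]
    rfl
  have hLe : ∀ k ω, L k ω = Lt k (T ω) := by
    intro k ω
    rw [hL]
    simp_rw [hpe]
    rfl
  have hYe : Y = fun ω => Φ (U ω, T ω) := by
    funext ω i
    rw [hY]
    simp_rw [hLe, hpe, hXe]
    rfl
  -- measurability
  have hfm : Measurable f := by
    have : f = (OO N).piecewise f (fun _ => 0) := by
      funext t
      by_cases ht : t ∈ OO N
      · simp [ht]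
      · rw [Set.piecewise_eq_of_notMem _ _ _ ht]
        exact hfzero t ht
    rw [this]
    exact ContinuousOn.measurable_piecewise hfcont continuousOn_const (OO_meas N)
  have hVtm : ∀ i, Measurable fun t => Vt t i := by
    intro i
    simp only [Vt]
    fun_prop
  have hZtm : ∀ i, Measurable fun t => Zt t i := by
    intro i
    have := hVtm i
    simp only [Zt]
    fun_prop
  have hXtm : ∀ i j, Measurable fun t => Xt t i j := by
    intro i j
    have := hZtm i
    simp only [Xt]
    split_ifs <;> fun_prop
  have hHtm : ∀ i, Measurable (Ht i) := by
    intro i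
    simp only [Ht]
    fun_prop
  have hatm : ∀ u, Measurable (at' u) := by
    intro u
    refine Measurable.mul (hfm.comp (measurable_pi_lambda _ fun i => hXtm i _)) ?_
    refine Finset.measurable_prod _ fun i _ => ?_
    exact (measurable_norm.comp ((hHtm i).comp (hXtm i _))).inv
  have hptm : ∀ u, Measurable (pt u) := fun u =>
    (hatm u).div (Finset.measurable_sum _ fun v _ => hatm v)
  have hLtm : ∀ k, Measurable (Lt k) := fun k => Finset.measurable_sum _ fun j _ => hptm _
  have hΦm : Measurable Φ := by
    refine measurable_pi_lambda _ fun i => Finset.measurable_sum _ fun k _ => ?_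
    refine Measurable.ite ?_ ((hXtm i _).comp measurable_snd) measurable_const
    have m1 : MeasurableSet {z : ℝ × (Fin N → ℝ) | Lt k z.2 ≤ z.1} :=
      measurableSet_le ((hLtm k).comp measurable_snd) measurable_fst
    have m2 : MeasurableSet {z : ℝ × (Fin N → ℝ) | z.1 < Lt k z.2 + pt (e k) z.2} :=
      measurableSet_lt measurable_fst
        (((hLtm k).comp measurable_snd).add ((hptm _).comp measurable_snd))
    exact m1.inter m2
  -- constants
  let d : Fin N → ℝ := fun i => c i / μ i
  have hd : ∀ i, 0 < d i := by
    intro i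
    have : d i = (μ i * c i) / μ i ^ 2 := by
      have := hμ i
      simp only [d]; field_simp
    rw [this]
    have := hμ i
    have := hμc i
    positivity
  let h : (Fin N → ℝ) → ℝ := fun t => f t * ∏ i, t i
  let S : (Fin N → ℝ) → ℝ := fun t => ∑ s, h (RR d s t)
  have hhpos : ∀ t ∈ OO N, 0 < h t := fun t ht =>
    mul_pos (hfpos t ht) (Finset.prod_pos fun i _ => ht i)
  have hSpos : ∀ t ∈ OO N, 0 < S t := fun t ht =>
    Finset.sum_pos (fun s _ => hhpos _ (RR_mem hd s ht)) Finset.univ_nonempty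
  -- pointwise description
  have hpt : ∀ t ∈ OO N, (∀ i, t i ≠ d i) →
      ∃ ε : (Fin N → Fin 2) ≃ (Fin N → Fin 2), (∀ u, (fun i => Xt t i (u i)) = RR d (ε u) t) ∧
        ∀ u, pt u t = h (RR d (ε u) t) / S t := by
    intro t ht htd
    have x0 : ∀ i, Xt t i 0 = min (t i) (d i ^ 2 / t i) := by
      intro i
      have := roots (hσ i) (hμc i) (ht i) (V := Vt t i) rfl
      simpa [Xt, Zt] using this
    have x1 : ∀ i, Xt t i 1 = max (t i) (d i ^ 2 / t i) := by
      intro i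
      have e0 := x0 i
      have e1 : Xt t i 1 = (c i) ^ 2 / ((μ i) ^ 2 * Xt t i 0) := by simp [Xt]
      have hdi := hd i
      have hti := ht i
      have hmm : min (t i) (d i ^ 2 / t i) * max (t i) (d i ^ 2 / t i) = d i ^ 2 := by
        rw [min_mul_max]; field_simp
      have hmin : 0 < min (t i) (d i ^ 2 / t i) := lt_min hti (by positivity)
      have hcd : c i ^ 2 = μ i ^ 2 * d i ^ 2 := by
        have := hμ i
        simp only [d]; field_simp
      have := hμ i
      rw [e1, e0, hcd, div_eq_iff (by positivity)]
      linear_combination (-(μ i) ^ 2) * hmm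
    obtain ⟨ε, hε⟩ := choice_lemma t (Xt t) x0 x1
    refine ⟨ε, hε, ?_⟩
    let κ : Fin N → ℝ := fun i => (|μ i ^ 2 * t i ^ 2 - c i ^ 2| / (σ i ^ 2 * t i))⁻¹
    have hκ : ∀ i, 0 < κ i := by
      intro i
      have h1 := hσ i
      have h2 := ht i
      have h3 : μ i ^ 2 * t i ^ 2 - c i ^ 2 ≠ 0 := by
        intro h0
        have h4 : (μ i * t i - c i) * (μ i * t i + c i) = 0 := by linear_combination h0
        have h5 := hμ i
        rcases mul_eq_zero.1 h4 with h6 | h6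
        · apply htd i
          simp only [d]
          field_simp
          linarith
        · have h7 : t i = - d i := by
            simp only [d]
            field_simp
            linarith
          have := hd i
          linarith
      have h4 := abs_pos.2 h3
      simp only [κ]
      positivity
    have hat : ∀ u, at' u t = h (RR d (ε u) t) * ∏ i, κ i := by
      intro u
      have hw : ∀ i, |Ht i (Xt t i (u i))|⁻¹ = Xt t i (u i) * κ i := by
        intro i
        refine weight_lemma (hσ i) (hμ i) (hc i) (ht i) _ ?_
        rw [congrFun (hε u) i]
        simp only [RR]
        split_ifs
        · exact Or.inl rfl
        · exact Or.inr rfl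
      simp only [at']
      simp_rw [hw]
      rw [Finset.prod_mul_distrib, ← mul_assoc]
      congr 1
      rw [← hε u]
    intro u
    have hK : (∏ i, κ i) ≠ 0 := (Finset.prod_pos fun i _ => hκ i).ne'
    simp only [pt]
    simp_rw [hat]
    rw [← Finset.sum_mul, mul_div_mul_right _ _ hK]
    congr 1
    exact Equiv.sum_comp ε (fun s => h (RR d s t))
  -- law of `Y`
  refine Measure.ext fun A hA => ?_
  let g : (Fin N → ℝ) → ENNReal := A.indicator 1
  have hgm : Measurable g := measurable_one.indicator hA
  have hprob : IsProbabilityMeasure (Measure.map T P) :=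
    Measure.isProbabilityMeasure_map hTm.aemeasurable
  have hUT : Measure.map (fun ω => (U ω, T ω)) P
      = (volume.restrict (Set.Icc (0 : ℝ) 1)).prod (Measure.map T P) := by
    rw [(indepFun_iff_map_prod_eq_prod_map_map hUm.aemeasurable hTm.aemeasurable).1 hindep, hU]
  have hoff : ∀ G : (Fin N → ℝ) → ENNReal,
      ∫⁻ t, ENNReal.ofReal (f t) * G t = ∫⁻ t in OO N, ENNReal.ofReal (f t) * G t := by
    intro G
    rw [← lintegral_indicator (OO_meas N)]
    refine lintegral_congr fun t => ?_
    by_cases ht : t ∈ OO N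
    · simp [ht]
    · simp [ht, hfzero t ht]
  have hgen : ∀ᵐ t : Fin N → ℝ, ∀ i, t i ≠ d i := by
    rw [ae_all_iff]
    intro i
    exact Measure.ae_eval_ne (μ := fun _ : Fin N => (volume : Measure ℝ)) i (d i)
  have hmeasF : Measurable fun t => (volume.restrict (Set.Icc (0 : ℝ) 1))
      ((fun u => (u, t)) ⁻¹' (Φ ⁻¹' A)) := measurable_measure_prodMk_right (hΦm hA)
  have hR : Measure.map T P A = ∫⁻ t in OO N, ENNReal.ofReal (f t) * g t := by
    rw [← hoff, ← lintegral_indicator_one hA, hlaw,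
      lintegral_withDensity_eq_lintegral_mul _ hfm.ennreal_ofReal hgm]
    rfl
  rw [hR, hYe]
  have : Measure.map (fun ω => Φ (U ω, T ω)) P
      = Measure.map Φ (Measure.map (fun ω => (U ω, T ω)) P) :=
    (Measure.map_map hΦm (hUm.prodMk hTm)).symm
  rw [this, hUT, Measure.map_apply hΦm hA, Measure.prod_apply_symm (hΦm hA), hlaw,
    lintegral_withDensity_eq_lintegral_mul _ hfm.ennreal_ofReal hmeasF]
  simp only [Pi.mul_apply]
  rw [hoff, ← key_integral hd f hfm hfpos g hgm h S rfl rfl]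
  refine setLIntegral_congr_fun_ae (OO_meas N) ?_
  filter_upwards [hgen] with t htd ht
  obtain ⟨ε, hε, hpε⟩ := hpt t ht htd
  congr 1
  have hsum1 : ∑ k, pt (e k) t = 1 := by
    rw [Equiv.sum_comp e (fun u => pt u t)]
    simp_rw [hpε]
    rw [Equiv.sum_comp ε (fun s => h (RR d s t) / S t), ← Finset.sum_div]
    exact div_self (hSpos t ht).ne'
  have hnn : ∀ k, 0 ≤ pt (e k) t := by
    intro k
    rw [hpε]
    exact (div_pos (hhpos _ (RR_mem hd _ ht)) (hSpos t ht)).le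
  have hint := interval_lemma (fun k => pt (e k) t) hnn hsum1 (fun k => Lt k t) (fun k => rfl)
    (fun k i => Xt t i (e k i)) A hA
  refine Eq.trans hint ?_
  rw [Equiv.sum_comp e (fun u => ENNReal.ofReal (pt u t) * A.indicator 1 (fun i => Xt t i (u i)))]
  simp_rw [hpε, hε]
  exact Equiv.sum_comp ε (fun s => ENNReal.ofReal (h (RR d s t) / S t) * g (RR d s t))
end

section
/- Let μ ≠ 0, c ≠ 0, σ > 0 with μc > 0, and set H(t) = (μt − c)² / (σ²t). Let T be a random variable with values in (0,∞) whose law has a continuous, strictly positive density f on (0,∞). Set V = H(T), X₁ = c/μ + σ²V/(2μ²) − (σ√V/(2μ²))·√(4μc + σ²V), X₂ = c²/(μ²X₁), and p₁ = (1 + |H′(X₁)/H′(X₂)| · f(X₂)/f(X₁))⁻¹ (almost surely well defined). Let U be uniform on [0,1] and independent of T. Then the random variable X₁·1{U ≤ p₁} + X₂·1{U > p₁} has the same distribution as T. -/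
open MeasureTheory ProbabilityTheory Real

lemma aux_unif (p x y : ℝ) (hp0 : 0 ≤ p) (hp1 : p ≤ 1) (B : Set ℝ) :
    (volume.restrict (Set.Icc (0 : ℝ) 1)) {u : ℝ | (if u ≤ p then x else y) ∈ B}
      = ENNReal.ofReal p * B.indicator 1 x + ENNReal.ofReal (1 - p) * B.indicator 1 y := by
  have h1 : (volume.restrict (Set.Icc (0 : ℝ) 1)) (Set.Iic p) = ENNReal.ofReal p := by
    rw [Measure.restrict_apply measurableSet_Iic]
    have : Set.Iic p ∩ Set.Icc (0:ℝ) 1 = Set.Icc 0 p := by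
      ext u; simp only [Set.mem_inter_iff, Set.mem_Iic, Set.mem_Icc]
      constructor
      · rintro ⟨h, h2, h3⟩; exact ⟨h2, h⟩
      · rintro ⟨h, h2⟩; exact ⟨h2, h, h2.trans hp1⟩
    rw [this]; simp
  have h2 : (volume.restrict (Set.Icc (0 : ℝ) 1)) (Set.Ioi p) = ENNReal.ofReal (1 - p) := by
    rw [Measure.restrict_apply measurableSet_Ioi]
    have : Set.Ioi p ∩ Set.Icc (0:ℝ) 1 = Set.Ioc p 1 := by
      ext u; simp only [Set.mem_inter_iff, Set.mem_Ioi, Set.mem_Icc, Set.mem_Ioc]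
      constructor
      · rintro ⟨h, h2, h3⟩; exact ⟨h, h3⟩
      · rintro ⟨h, h2⟩; exact ⟨h, hp0.trans h.le, h2⟩
    rw [this]; simp
  by_cases hx : x ∈ B <;> by_cases hy : y ∈ B
  · have : {u : ℝ | (if u ≤ p then x else y) ∈ B} = Set.univ := by
      ext u; by_cases h : u ≤ p <;> simp [h, hx, hy]
    rw [this]
    simp only [Set.indicator_of_mem hx, Set.indicator_of_mem hy, Pi.one_apply, mul_one]
    rw [← ENNReal.ofReal_add hp0 (by linarith)]
    simp
  · have : {u : ℝ | (if u ≤ p then x else y) ∈ B} = Set.Iic p := by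
      ext u; by_cases h : u ≤ p <;> simp [h, hx, hy]
    rw [this, h1]; simp [hx, hy]
  · have : {u : ℝ | (if u ≤ p then x else y) ∈ B} = Set.Ioi p := by
      ext u; by_cases h : u ≤ p <;> simp [h, hx, hy]
      exact lt_of_not_ge h
    rw [this, h2]; simp [hx, hy]
  · have : {u : ℝ | (if u ≤ p then x else y) ∈ B} = ∅ := by
      ext u; by_cases h : u ≤ p <;> simp [h, hx, hy]
    rw [this]; simp [hx, hy]

lemma aux_cov (a : ℝ) (ha : 0 < a) (G : ℝ → ENNReal) :
    ∫⁻ t in Set.Ioi (0:ℝ), G t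
      = ∫⁻ s in Set.Ioi (0:ℝ), ENNReal.ofReal (a ^ 2 / s ^ 2) * G (a ^ 2 / s) := by
  have himg : (fun s : ℝ => a ^ 2 / s) '' Set.Ioi 0 = Set.Ioi 0 := by
    ext t
    constructor
    · rintro ⟨s, hs, rfl⟩
      have : 0 < s := hs
      show 0 < a ^ 2 / s
      positivity
    · intro ht
      have ht' : 0 < t := ht
      refine ⟨a ^ 2 / t, ?_, ?_⟩
      · show 0 < a ^ 2 / t
        positivity
      · show a ^ 2 / (a ^ 2 / t) = t
        field_simp
  have hinj : Set.InjOn (fun s : ℝ => a ^ 2 / s) (Set.Ioi 0) := by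
    intro s hs t ht h
    have hs' : 0 < s := hs
    have ht' : 0 < t := ht
    have h' : a ^ 2 / s = a ^ 2 / t := h
    field_simp at h'
    exact h'.symm
  have hd : ∀ s ∈ Set.Ioi (0:ℝ),
      HasDerivWithinAt (fun s : ℝ => a ^ 2 / s) (-(a ^ 2 / s ^ 2)) (Set.Ioi 0) s := by
    intro s hs
    have hs' : s ≠ 0 := ne_of_gt hs
    have := ((hasDerivAt_inv hs').const_mul (a ^ 2)).hasDerivWithinAt (s := Set.Ioi 0)
    simpa [div_eq_mul_inv] using this
  have := lintegral_image_eq_lintegral_abs_deriv_mul measurableSet_Ioi hd hinj G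
  rw [himg] at this
  rw [this]
  refine setLIntegral_congr_fun measurableSet_Ioi ?_
  intro s hs
  have : |(-(a ^ 2 / s ^ 2))| = a ^ 2 / s ^ 2 := by
    rw [abs_neg, abs_of_nonneg (by positivity)]
  simp only [this]

lemma aux_key (a : ℝ) (ha : 0 < a) (f : ℝ → ℝ) (hfm : Measurable f)
    (hfpos : ∀ t : ℝ, 0 < t → 0 < f t) (x₁ x₂ p : ℝ → ℝ)
    (hx₁ : ∀ t, x₁ t = min t (a ^ 2 / t)) (hx₂ : ∀ t, x₂ t = max t (a ^ 2 / t))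
    (hp : ∀ t, p t = f (x₁ t) / (f (x₁ t) + a ^ 2 / x₁ t ^ 2 * f (a ^ 2 / x₁ t)))
    (B : Set ℝ) (hB : MeasurableSet B) :
    ∫⁻ t in Set.Ioi (0:ℝ), ENNReal.ofReal (f t) *
      (ENNReal.ofReal (p t) * B.indicator 1 (x₁ t)
        + ENNReal.ofReal (1 - p t) * B.indicator 1 (x₂ t))
      = ∫⁻ t in Set.Ioi (0:ℝ), ENNReal.ofReal (f t) * B.indicator 1 t := by
  set g : ℝ → ℝ := fun t => a ^ 2 / t ^ 2 * f (a ^ 2 / t) with hg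
  have hgm : Measurable g := by fun_prop
  have hgpos : ∀ t : ℝ, 0 < t → 0 < g t := by
    intro t ht
    have := hfpos (a ^ 2 / t) (by positivity)
    simp only [hg]; positivity
  have hind : Measurable (B.indicator (1 : ℝ → ENNReal)) := measurable_one.indicator hB
  have hgg : ∀ t : ℝ, 0 < t → f (a ^ 2 / t) = t ^ 2 / a ^ 2 * g t := by
    intro t ht; simp only [hg]; field_simp
  have hgf : ∀ t : ℝ, 0 < t → g (a ^ 2 / t) = t ^ 2 / a ^ 2 * f t := by
    intro t ht
    have : a ^ 2 / (a ^ 2 / t) = t := by field_simp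
    simp only [hg, this]; field_simp
  have step1 : ∀ t ∈ Set.Ioi (0:ℝ), ENNReal.ofReal (f t) *
      (ENNReal.ofReal (p t) * B.indicator 1 (x₁ t)
        + ENNReal.ofReal (1 - p t) * B.indicator 1 (x₂ t))
      = ENNReal.ofReal (f t * f t / (f t + g t)) * B.indicator 1 t
        + ENNReal.ofReal (f t * g t / (f t + g t)) * B.indicator 1 (a ^ 2 / t) := by
    intro t ht
    have ht' : 0 < t := ht
    have hf := hfpos t ht'
    have hg' := hgpos t ht'
    rcases le_total t (a ^ 2 / t) with h | h
    · rw [hx₁, hx₂, min_eq_left h, max_eq_right h]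
      have e1 : p t = f t / (f t + g t) := by rw [hp, hx₁, min_eq_left h]
      have e2 : 1 - p t = g t / (f t + g t) := by rw [e1]; field_simp; ring
      rw [e1, mul_add, ← mul_assoc, ← mul_assoc, ← ENNReal.ofReal_mul hf.le]
      rw [← e1, e2, ← ENNReal.ofReal_mul hf.le, e1, mul_div_assoc (f t) (f t), mul_div_assoc (f t) (g t)]
    · rw [hx₁, hx₂, min_eq_right h, max_eq_left h]
      have e1 : p t = g t / (f t + g t) := by
        have e0 : p t = f (a ^ 2 / t) / (f (a ^ 2 / t) + g (a ^ 2 / t)) := by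
          rw [hp, hx₁, min_eq_right h]
        rw [e0, hgg t ht', hgf t ht']
        field_simp; ring
      have e2 : 1 - p t = f t / (f t + g t) := by rw [e1]; field_simp; ring
      rw [mul_add, ← mul_assoc, ← mul_assoc, ← ENNReal.ofReal_mul hf.le, ← ENNReal.ofReal_mul hf.le,
        e2, e1, mul_div_assoc (f t) (f t), mul_div_assoc (f t) (g t), add_comm]
  rw [setLIntegral_congr_fun measurableSet_Ioi step1]
  rw [lintegral_add_left (by fun_prop)]
  rw [aux_cov a ha (fun t => ENNReal.ofReal (f t * g t / (f t + g t)) * B.indicator 1 (a ^ 2 / t))]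
  rw [← lintegral_add_left (by fun_prop)]
  refine setLIntegral_congr_fun measurableSet_Ioi ?_
  intro t ht
  have ht' : 0 < t := ht
  have hf := hfpos t ht'
  have hg' := hgpos t ht'
  have e : a ^ 2 / (a ^ 2 / t) = t := by field_simp
  simp only [e]
  rw [← mul_assoc, ← ENNReal.ofReal_mul (by positivity), ← add_mul,
    ← ENNReal.ofReal_add (by positivity) ?_, hgg t ht', hgf t ht']
  · congr 2
    field_simp
    try ring
  · rw [hgg t ht', hgf t ht']; positivity

lemma aux_x1 (μ c σ t : ℝ) (hμ : μ ≠ 0) (hσ : 0 < σ) (hμc : 0 < μ * c) (ht : 0 < t) (V : ℝ)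
    (hV : V = (μ * t - c) ^ 2 / (σ ^ 2 * t)) :
    c / μ + σ ^ 2 * V / (2 * μ ^ 2)
      - (σ * Real.sqrt V / (2 * μ ^ 2)) * Real.sqrt (4 * μ * c + σ ^ 2 * V)
      = min t ((c / μ) ^ 2 / t) := by
  have hσV : σ ^ 2 * V = (μ * t - c) ^ 2 / t := by rw [hV]; field_simp
  have h2 : 4 * μ * c + σ ^ 2 * V = (μ * t + c) ^ 2 / t := by rw [hσV]; field_simp; ring
  have h1 : σ * Real.sqrt V = Real.sqrt ((μ * t - c) ^ 2 / t) := by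
    rw [← hσV, Real.sqrt_mul (by positivity), Real.sqrt_sq hσ.le]
  have h3 : σ * Real.sqrt V * Real.sqrt (4 * μ * c + σ ^ 2 * V)
      = |μ ^ 2 * t ^ 2 - c ^ 2| / t := by
    rw [h1, h2, ← Real.sqrt_mul (by positivity)]
    have : (μ * t - c) ^ 2 / t * ((μ * t + c) ^ 2 / t) = ((μ ^ 2 * t ^ 2 - c ^ 2) / t) ^ 2 := by
      field_simp; ring
    rw [this, Real.sqrt_sq_eq_abs, abs_div, abs_of_pos ht]
  rw [div_mul_eq_mul_div, h3, hσV]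
  rcases le_total t ((c / μ) ^ 2 / t) with h | h
  · rw [min_eq_left h]
    have h' : μ ^ 2 * t ^ 2 - c ^ 2 ≤ 0 := by
      rw [le_div_iff₀ ht, div_pow, le_div_iff₀ (by positivity)] at h
      linarith
    rw [abs_of_nonpos h']
    field_simp; ring
  · rw [min_eq_right h]
    have h' : 0 ≤ μ ^ 2 * t ^ 2 - c ^ 2 := by
      rw [div_le_iff₀ ht, div_pow, div_le_iff₀ (by positivity)] at h
      linarith
    rw [abs_of_nonneg h']
    field_simp; ring

/-- Multiple-roots transformation in one dimension: for `μ ≠ 0`, `c ≠ 0`, `σ > 0` with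
`μ c > 0`, let `T` be a positive random variable whose law has a continuous strictly
positive density `f` on `(0, ∞)`, set `V = H(T)` with `H(t) = (μ t − c)² / (σ² t)`, let
`X₁, X₂` be the two roots of `H = V` and `p₁ = (1 + |H′(X₁)/H′(X₂)| f(X₂)/f(X₁))⁻¹`.
If `U` is uniform on `[0,1]` and independent of `T`, then
`X₁ 1{U ≤ p₁} + X₂ 1{U > p₁}` has the same distribution as `T`. -/
theorem stmt11 {Ω : Type*} [MeasurableSpace Ω] (P : Measure Ω) [IsProbabilityMeasure P]
    (μ c σ : ℝ) (hμ : μ ≠ 0) (hc : c ≠ 0) (hσ : 0 < σ) (hμc : 0 < μ * c)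
    (T : Ω → ℝ) (hTm : Measurable T) (hTpos : ∀ᵐ ω ∂P, 0 < T ω)
    (f : ℝ → ℝ) (hfcont : ContinuousOn f (Set.Ioi 0))
    (hfpos : ∀ t : ℝ, 0 < t → 0 < f t) (hfzero : ∀ t : ℝ, t ≤ 0 → f t = 0)
    (hlaw : Measure.map T P = volume.withDensity fun t => ENNReal.ofReal (f t))
    (V X₁ X₂ p₁ : Ω → ℝ)
    (hV : ∀ ω, V ω = (μ * T ω - c) ^ 2 / (σ ^ 2 * T ω))
    (hX₁ : ∀ ω, X₁ ω = c / μ + σ ^ 2 * V ω / (2 * μ ^ 2)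
      - (σ * Real.sqrt (V ω) / (2 * μ ^ 2)) * Real.sqrt (4 * μ * c + σ ^ 2 * V ω))
    (hX₂ : ∀ ω, X₂ ω = c ^ 2 / (μ ^ 2 * X₁ ω))
    (H' : ℝ → ℝ) (hH' : ∀ x, H' x = (μ ^ 2 * x ^ 2 - c ^ 2) / (σ ^ 2 * x ^ 2))
    (hp₁ : ∀ ω, p₁ ω = (1 + |H' (X₁ ω) / H' (X₂ ω)| * (f (X₂ ω) / f (X₁ ω)))⁻¹)
    (U : Ω → ℝ) (hUm : Measurable U)
    (hU : Measure.map U P = volume.restrict (Set.Icc (0 : ℝ) 1))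
    (hindep : IndepFun U T P) :
    Measure.map (fun ω => if U ω ≤ p₁ ω then X₁ ω else X₂ ω) P = Measure.map T P := by
  have ha : 0 < c / μ := by
    have : c / μ = (μ * c) / μ ^ 2 := by field_simp
    rw [this]; positivity
  set a := c / μ with ha_def
  have hca : c = a * μ := by rw [ha_def]; field_simp
  have hfm : Measurable f := by
    have : f = (Set.Ioi (0:ℝ)).indicator f := by
      ext t
      by_cases h : 0 < t
      · rw [Set.indicator_of_mem (show t ∈ Set.Ioi (0:ℝ) from h)]
      · rw [Set.indicator_of_notMem (show t ∉ Set.Ioi (0:ℝ) from h), hfzero t (not_lt.mp h)]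
    rw [this]
    rw [← Set.piecewise_eq_indicator]
    exact hfcont.measurable_piecewise continuousOn_const measurableSet_Ioi
  let x₁ : ℝ → ℝ := fun t => min t (a ^ 2 / t)
  let x₂ : ℝ → ℝ := fun t => max t (a ^ 2 / t)
  let p : ℝ → ℝ := fun t => f (x₁ t) / (f (x₁ t) + a ^ 2 / x₁ t ^ 2 * f (a ^ 2 / x₁ t))
  have hx₁m : Measurable x₁ := by fun_prop
  have hx₂m : Measurable x₂ := by fun_prop
  have hpm : Measurable p := by fun_prop
  let Φ : ℝ × ℝ → ℝ := fun z => if z.2 ≤ p z.1 then x₁ z.1 else x₂ z.1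
  have hΦ : Measurable Φ :=
    Measurable.ite (measurableSet_le (by fun_prop) (by fun_prop)) (by fun_prop) (by fun_prop)
  have hTa : ∀ᵐ ω ∂P, T ω ≠ a := by
    have h0 : ∀ᵐ t ∂(Measure.map T P), t ≠ a := by
      rw [hlaw]
      exact (withDensity_absolutelyContinuous _ _).ae_le (compl_mem_ae_iff.mpr (measure_singleton a))
    exact ae_of_ae_map hTm.aemeasurable h0
  have hx₁pos : ∀ t, 0 < t → 0 < x₁ t := by
    intro t ht
    exact lt_min ht (by positivity)
  have hae : (fun ω => if U ω ≤ p₁ ω then X₁ ω else X₂ ω) =ᵐ[P] fun ω => Φ (T ω, U ω) := by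
    filter_upwards [hTpos, hTa] with ω h0 hne
    have e1 : X₁ ω = x₁ (T ω) := by
      rw [hX₁]; exact aux_x1 μ c σ (T ω) hμ hσ hμc h0 (V ω) (hV ω)
    have hpos := hx₁pos _ h0
    have e2' : X₂ ω = a ^ 2 / x₁ (T ω) := by
      rw [hX₂, e1, hca]; field_simp
    have e2 : X₂ ω = x₂ (T ω) := by
      rw [e2']
      rcases le_total (T ω) (a ^ 2 / T ω) with h | h
      · simp only [x₁, x₂, min_eq_left h, max_eq_right h]
      · simp only [x₁, x₂, min_eq_right h, max_eq_left h]
        field_simp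
    have hxa : x₁ (T ω) ≠ a := by
      rcases le_total (T ω) (a ^ 2 / T ω) with h | h
      · simp only [x₁, min_eq_left h]; exact hne
      · simp only [x₁, min_eq_right h]
        intro h2
        field_simp at h2
        exact hne h2.symm
    have e3 : p₁ ω = p (T ω) := by
      rw [hp₁, e2', e1]
      show _ = f (x₁ (T ω)) / (f (x₁ (T ω)) + a ^ 2 / x₁ (T ω) ^ 2 * f (a ^ 2 / x₁ (T ω)))
      generalize x₁ (T ω) = x at hpos hxa
      have hsq : x ^ 2 - a ^ 2 ≠ 0 := by
        have : x ^ 2 - a ^ 2 = (x - a) * (x + a) := by ring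
        rw [this]
        exact mul_ne_zero (sub_ne_zero.mpr hxa) (by positivity)
      have hsq' : a ^ 2 - x ^ 2 ≠ 0 := by
        intro h; apply hsq; linarith
      have n1 : H' x = μ ^ 2 * (x ^ 2 - a ^ 2) / (σ ^ 2 * x ^ 2) := by
        rw [hH', hca]; congr 1; ring
      have n2 : H' (a ^ 2 / x) = - (μ ^ 2 * (x ^ 2 - a ^ 2) / (σ ^ 2 * a ^ 2)) := by
        rw [hH', hca]; field_simp; ring
      have e4 : H' x / H' (a ^ 2 / x) = - (a ^ 2 / x ^ 2) := by
        rw [n1, n2]; field_simp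
      rw [e4, abs_neg, abs_of_pos (by positivity)]
      have f1 := hfpos x hpos
      have f2 := hfpos (a ^ 2 / x) (by positivity)
      generalize f (a ^ 2 / x) = y at f2
      field_simp
    rw [e1, e2, e3]
  rw [Measure.map_congr hae]
  have hjoint : Measure.map (fun ω => (T ω, U ω)) P
      = (Measure.map T P).prod (Measure.map U P) :=
    (indepFun_iff_map_prod_eq_prod_map_map hTm.aemeasurable hUm.aemeasurable).mp hindep.symm
  have hcomp : Measure.map (fun ω => Φ (T ω, U ω)) P
      = Measure.map Φ ((Measure.map T P).prod (Measure.map U P)) := by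
    rw [← hjoint, Measure.map_map hΦ (hTm.prodMk hUm)]; rfl
  rw [hcomp]
  have hprobU : IsProbabilityMeasure (Measure.map U P) :=
    Measure.isProbabilityMeasure_map hUm.aemeasurable
  have hdens : ∀ G : ℝ → ENNReal, Measurable G →
      ∫⁻ t, G t ∂(Measure.map T P) = ∫⁻ t in Set.Ioi (0:ℝ), ENNReal.ofReal (f t) * G t := by
    intro G hG
    rw [hlaw, lintegral_withDensity_eq_lintegral_mul _ (by fun_prop) hG]
    rw [← lintegral_indicator measurableSet_Ioi]
    congr 1
    ext t
    by_cases h : 0 < t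
    · rw [Set.indicator_of_mem (show t ∈ Set.Ioi (0:ℝ) from h)]; rfl
    · rw [Set.indicator_of_notMem (show t ∉ Set.Ioi (0:ℝ) from h)]
      simp [hfzero t (not_lt.mp h)]
  ext B hB
  have hind : Measurable (B.indicator (1 : ℝ → ENNReal)) := measurable_one.indicator hB
  rw [Measure.map_apply hΦ hB, Measure.prod_apply (hΦ hB),
    hdens _ (measurable_measure_prodMk_left (hΦ hB))]
  have hR : (Measure.map T P) B
      = ∫⁻ t in Set.Ioi (0:ℝ), ENNReal.ofReal (f t) * B.indicator 1 t := by
    rw [← hdens _ hind, lintegral_indicator_one hB]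
  rw [hR, ← aux_key a ha f hfm hfpos x₁ x₂ p (fun _ => rfl) (fun _ => rfl) (fun _ => rfl) B hB]
  refine setLIntegral_congr_fun measurableSet_Ioi ?_
  intro t ht
  have hx := hx₁pos t ht
  have f1 := hfpos _ hx
  have f2 := hfpos (a ^ 2 / x₁ t) (by positivity)
  have hden : 0 ≤ a ^ 2 / x₁ t ^ 2 * f (a ^ 2 / x₁ t) := by positivity
  have hp0 : 0 ≤ p t := by
    simp only [p]; positivity
  have hp1 : p t ≤ 1 := by
    simp only [p]
    rw [div_le_one (by linarith)]; linarith
  have := aux_unif (p t) (x₁ t) (x₂ t) hp0 hp1 B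
  rw [← hU] at this
  simp only
  rw [← this]
  rfl
end

section
/- Let Z and W be independent standard normal random variables, let ρ ∈ [−1,1], and set Z₂ = ρZ + √(1−ρ²)·W (so that (Z, Z₂) is a bivariate standard Gaussian vector with correlation ρ). Let Φ denote the cumulative distribution function of the standard normal distribution. Then Cov(Φ(Z), Φ(Z₂)) = (1/(2π))·arcsin(ρ/2); equivalently, since Var(Φ(Z)) = Var(Φ(Z₂)) = 1/12, the correlation ρ_U of the uniform variables Φ(Z) and Φ(Z₂) satisfies ρ = 2·sin((π/6)·ρ_U). -/
open MeasureTheory ProbabilityTheory Real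

/-- The cumulative distribution function of the standard normal distribution. -/
noncomputable def stdNormalCDF (x : ℝ) : ℝ := ((gaussianReal 0 1) (Set.Iic x)).toReal

noncomputable def gphi (x : ℝ) : ℝ := (√(2 * π))⁻¹ * rexp (-x ^ 2 / 2)

lemma gphi_eq (x : ℝ) : gaussianPDFReal 0 1 x = gphi x := by
  simp [gaussianPDFReal, gphi]

lemma gphi_cont : Continuous gphi := by unfold gphi; fun_prop

lemma gphi_nonneg (x : ℝ) : 0 ≤ gphi x := by unfold gphi; positivity

lemma gphi_le_one (x : ℝ) : gphi x ≤ 1 := by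
  unfold gphi
  have h1 : 1 ≤ √(2 * π) := Real.one_le_sqrt.2 (by nlinarith [pi_gt_three])
  have h2 : rexp (-x ^ 2 / 2) ≤ 1 := Real.exp_le_one_iff.2 (by nlinarith [sq_nonneg x])
  exact mul_le_one₀ (inv_le_one_of_one_le₀ h1) (exp_pos _).le h2

lemma gphi_deriv (x : ℝ) : HasDerivAt gphi (-x * gphi x) x := by
  unfold gphi
  have h : HasDerivAt (fun x : ℝ => -x ^ 2 / 2) (-x) x := by
    have := ((hasDerivAt_pow 2 x).neg).div_const 2
    exact this.congr_deriv (by simp; ring)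
  exact ((h.exp).const_mul ((√(2 * π))⁻¹)).congr_deriv (by ring)

lemma gphi_int : Integrable gphi := by
  have := integrable_gaussianPDFReal 0 1
  simpa only [funext gphi_eq] using this

lemma cdf_nonneg' (x : ℝ) : 0 ≤ stdNormalCDF x := ENNReal.toReal_nonneg

lemma cdf_le_one' (x : ℝ) : stdNormalCDF x ≤ 1 := by
  unfold stdNormalCDF
  exact measureReal_le_one

lemma cdf_norm_le (x : ℝ) : ‖stdNormalCDF x‖ ≤ 1 := by
  rw [Real.norm_of_nonneg (cdf_nonneg' x)]; exact cdf_le_one' x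

lemma cdf_integral (x : ℝ) : stdNormalCDF x = ∫ t in Set.Iic x, gphi t := by
  unfold stdNormalCDF
  rw [gaussianReal_apply_eq_integral 0 one_ne_zero, ENNReal.toReal_ofReal]
  · simp only [gphi_eq]
  · exact integral_nonneg fun x => gaussianPDFReal_nonneg _ _ _

lemma cdf_deriv (x : ℝ) : HasDerivAt stdNormalCDF (gphi x) x := by
  have h : stdNormalCDF = fun y => (∫ t in (0:ℝ)..y, gphi t) + ∫ t in Set.Iic 0, gphi t := by
    ext y
    rw [cdf_integral, ← intervalIntegral.integral_Iic_sub_Iic gphi_int.integrableOn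
      gphi_int.integrableOn]
    ring
  rw [h]
  exact (intervalIntegral.integral_hasDerivAt_right (gphi_cont.intervalIntegrable _ _)
    gphi_cont.stronglyMeasurable.stronglyMeasurableAtFilter gphi_cont.continuousAt).add_const _

lemma cdf_cont : Continuous stdNormalCDF :=
  continuous_iff_continuousAt.2 fun x => (cdf_deriv x).continuousAt

lemma cdf_zero : stdNormalCDF 0 = 1 / 2 := by
  have h1 : ∫ t in Set.Iic (0:ℝ), gphi t = ∫ t in Set.Ioi (0:ℝ), gphi t := by
    have := integral_comp_neg_Iic (0:ℝ) gphi
    rw [neg_zero] at this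
    rw [← this]
    simp [gphi]
  have h2 : (∫ t in Set.Iic (0:ℝ), gphi t) + ∫ t in Set.Ioi (0:ℝ), gphi t = ∫ t, gphi t :=
    intervalIntegral.integral_Iic_add_Ioi gphi_int.integrableOn gphi_int.integrableOn
  have h3 : ∫ t, gphi t = 1 := by
    rw [← integral_gaussianPDFReal_eq_one 0 (v := 1) one_ne_zero]
    simp only [gphi_eq]
  rw [cdf_integral]
  linarith

lemma cdf_smooth (c s : ℝ) :
    ∫ w, stdNormalCDF (c + s * w) ∂(gaussianReal 0 1) = stdNormalCDF (c / √(1 + s ^ 2)) := by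
  have hpos : 0 < √(1 + s ^ 2) := by positivity
  have hA : ((gaussianReal 0 1).map ((-s) * ·)) ∗ (gaussianReal 0 1)
      = (gaussianReal 0 1).map (√(1 + s ^ 2) * ·) := by
    rw [gaussianReal_map_const_mul, gaussianReal_map_const_mul, gaussianReal_conv_gaussianReal]
    congr 1
    · simp
    · ext
      simp [Real.sq_sqrt (show 0 ≤ 1 + s ^ 2 by positivity)]
      ring
  have hB := congrArg (fun μ : Measure ℝ => μ (Set.Iic c)) hA
  beta_reduce at hB
  rw [Measure.map_apply (by fun_prop) measurableSet_Iic,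
    Measure.conv, Measure.map_apply (by fun_prop) measurableSet_Iic,
    Measure.prod_apply (measurableSet_Iic.preimage (by fun_prop)),
    lintegral_map (measurable_measure_prodMk_left (measurableSet_Iic.preimage (by fun_prop)))
      (by fun_prop)] at hB
  have e1 : ((fun x : ℝ => √(1 + s ^ 2) * x) ⁻¹' Set.Iic c) = Set.Iic (c / √(1 + s ^ 2)) := by
    ext x
    simp [le_div_iff₀ hpos, mul_comm]
  have e2 : ∀ w : ℝ, (Prod.mk (-s * w) ⁻¹' ((fun x : ℝ × ℝ => x.1 + x.2) ⁻¹' Set.Iic c))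
      = Set.Iic (c + s * w) := by
    intro w
    ext x
    simp only [Set.mem_preimage, Set.mem_Iic]
    constructor <;> intro h <;> linarith
  simp only [e1, e2] at hB
  unfold stdNormalCDF
  rw [← hB, integral_toReal]
  · have hm : Measurable fun x => (gaussianReal 0 1) (Set.Iic x) :=
      Monotone.measurable fun a b h => measure_mono (Set.Iic_subset_Iic.2 h)
    exact (hm.comp (by fun_prop : Measurable fun w : ℝ => c + s * w)).aemeasurable
  · exact ae_of_all _ fun w => measure_lt_top _ _

lemma cdf_mean : ∫ w, stdNormalCDF w ∂(gaussianReal 0 1) = 1 / 2 := by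
  have := cdf_smooth 0 1
  simpa [cdf_zero] using this

lemma ghelp_int (a : ℝ) : Integrable (fun z => stdNormalCDF z * gphi z * gphi (a * z)) := by
  refine gphi_int.mono' ?_ (ae_of_all _ fun z => ?_)
  · have := cdf_cont
    have := gphi_cont
    exact (by fun_prop : Continuous _).aestronglyMeasurable
  · have h1 := cdf_nonneg' z
    have h2 := cdf_le_one' z
    have h3 := gphi_nonneg z
    have h5 := gphi_nonneg (a * z)
    have h6 := gphi_le_one (a * z)
    rw [Real.norm_of_nonneg (by positivity)]
    calc _ ≤ 1 * gphi z * 1 := by gcongr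
      _ = _ := by ring

lemma zphi_int : Integrable (fun z => z * gphi z) := by
  have := (integrable_mul_exp_neg_mul_sq (b := 1 / 2) (by norm_num)).const_mul (√(2 * π))⁻¹
  convert this using 2 with z
  unfold gphi
  rw [show -z ^ 2 / 2 = -(1 / 2) * z ^ 2 by ring]
  ring

lemma ghelp_int2 (a : ℝ) :
    Integrable (fun z => z * (stdNormalCDF z * gphi z * gphi (a * z))) := by
  refine zphi_int.norm.mono' ?_ (ae_of_all _ fun z => ?_)
  · have := cdf_cont
    have := gphi_cont
    exact (by fun_prop : Continuous _).aestronglyMeasurable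
  · have h1 := cdf_nonneg' z
    have h2 := cdf_le_one' z
    have h3 := gphi_nonneg z
    have h5 := gphi_nonneg (a * z)
    have h6 := gphi_le_one (a * z)
    rw [norm_mul, norm_mul z, Real.norm_of_nonneg (show 0 ≤ stdNormalCDF z * gphi z * gphi (a * z) by positivity),
      Real.norm_of_nonneg h3]
    gcongr
    calc _ ≤ 1 * gphi z * 1 := by gcongr
      _ = _ := by ring

lemma ghelp_int3 (a : ℝ) : Integrable (fun z => gphi z * gphi z * gphi (a * z)) := by
  refine gphi_int.mono' ?_ (ae_of_all _ fun z => ?_)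
  · have := gphi_cont
    exact (by fun_prop : Continuous _).aestronglyMeasurable
  · have h2 := gphi_le_one z
    have h3 := gphi_nonneg z
    have h5 := gphi_nonneg (a * z)
    have h6 := gphi_le_one (a * z)
    rw [Real.norm_of_nonneg (by positivity)]
    calc _ ≤ 1 * gphi z * 1 := by gcongr
      _ = _ := by ring

lemma gtriple (a : ℝ) :
    ∫ z, gphi z * gphi z * gphi (a * z) = 1 / (2 * π * √(2 + a ^ 2)) := by
  have h : ∀ z, gphi z * gphi z * gphi (a * z)
      = ((√(2 * π))⁻¹) ^ 3 * rexp (-((2 + a ^ 2) / 2) * z ^ 2) := by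
    intro z
    unfold gphi
    rw [show -((2 + a ^ 2) / 2) * z ^ 2 = -z ^ 2 / 2 + -z ^ 2 / 2 + -(a * z) ^ 2 / 2 by ring,
      exp_add, exp_add]
    ring
  simp only [h]
  rw [integral_const_mul, integral_gaussian,
    show π / ((2 + a ^ 2) / 2) = (2 * π) / (2 + a ^ 2) by field_simp,
    Real.sqrt_div (by positivity)]
  have h1 : √(2 * π) ^ 2 = 2 * π := Real.sq_sqrt (by positivity)
  have h2 : 0 < √(2 * π) := by positivity
  have h3 : 0 < √(2 + a ^ 2) := by positivity
  generalize √(2 * π) = q at *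
  rw [← h1]
  field_simp

lemma gibp (a : ℝ) : (1 + a ^ 2) * ∫ z, z * (stdNormalCDF z * gphi z * gphi (a * z))
    = 1 / (2 * π * √(2 + a ^ 2)) := by
  have h := integral_eq_zero_of_hasDerivAt_of_integrable
    (f := fun z => stdNormalCDF z * gphi z * gphi (a * z))
    (f' := fun z => gphi z * gphi z * gphi (a * z)
      - (1 + a ^ 2) * (z * (stdNormalCDF z * gphi z * gphi (a * z))))
    (fun z => by
      have h1 : HasDerivAt (fun z => gphi (a * z)) (-(a * z) * gphi (a * z) * a) z := by
        have := (gphi_deriv (a * z)).comp z ((hasDerivAt_id z).const_mul a)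
        exact this.congr_deriv (by simp)
      exact (((cdf_deriv z).mul (gphi_deriv z)).mul h1).congr_deriv
        (by simp only [Pi.mul_apply]; ring))
    ((ghelp_int3 a).sub ((ghelp_int2 a).const_mul _)) (ghelp_int a)
  rw [integral_sub (ghelp_int3 a) ((ghelp_int2 a).const_mul _), integral_const_mul, gtriple] at h
  linarith

lemma F_deriv (a : ℝ) :
    HasDerivAt (fun a => ∫ z, stdNormalCDF z * stdNormalCDF (a * z) ∂(gaussianReal 0 1))
      (1 / (2 * π * ((1 + a ^ 2) * √(2 + a ^ 2)))) a := by
  have hc := cdf_cont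
  have hg := gphi_cont
  have h := hasDerivAt_integral_of_dominated_loc_of_deriv_le (μ := gaussianReal 0 1)
    (F := fun a z => stdNormalCDF z * stdNormalCDF (a * z))
    (F' := fun a z => stdNormalCDF z * (gphi (a * z) * z)) (bound := fun z => ‖z‖)
    (x₀ := a) (s := Set.univ) Filter.univ_mem
    (Filter.Eventually.of_forall fun b => (by fun_prop : Continuous _).aestronglyMeasurable)
    (Integrable.of_bound (C := 1) (by fun_prop : Continuous _).aestronglyMeasurable
      (ae_of_all _ fun z => by
        rw [norm_mul]
        exact mul_le_one₀ (cdf_norm_le _) (norm_nonneg _) (cdf_norm_le _)))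
    ((by fun_prop : Continuous _).aestronglyMeasurable)
    (ae_of_all _ fun z b _ => by
      rw [norm_mul, norm_mul, Real.norm_of_nonneg (gphi_nonneg _)]
      have h1 := cdf_norm_le z
      have h2 := gphi_le_one (b * z)
      have h3 := gphi_nonneg (b * z)
      calc _ ≤ 1 * (1 * ‖z‖) := by gcongr
        _ = _ := by ring)
    (by
      have := (memLp_id_gaussianReal (μ := 0) (v := 1) 1)
      exact (memLp_one_iff_integrable.1 (by exact_mod_cast this)).norm)
    (ae_of_all _ fun z b _ => by
      have := (cdf_deriv (b * z)).comp b ((hasDerivAt_id b).mul_const z)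
      simp only [one_mul] at this
      exact this.const_mul _)
  refine h.2.congr_deriv ?_
  rw [integral_gaussianReal_eq_integral_smul one_ne_zero]
  have h2 := gibp a
  have h3 : ∀ z, gaussianPDFReal 0 1 z • (stdNormalCDF z * (gphi (a * z) * z))
     = z * (stdNormalCDF z * gphi z * gphi (a * z)) := by
    intro z
    rw [gphi_eq, smul_eq_mul]; ring
  simp only [h3]
  have h4 : 0 < √(2 + a ^ 2) := by positivity
  have h5 : 0 < 1 + a ^ 2 := by positivity
  apply mul_left_cancel₀ (ne_of_gt h5)
  rw [h2]
  field_simp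

lemma G_deriv (a : ℝ) : HasDerivAt (fun a => (1 / (2 * π)) * arctan (a / √(2 + a ^ 2)))
      (1 / (2 * π * ((1 + a ^ 2) * √(2 + a ^ 2)))) a := by
  have hp : 0 < 2 + a ^ 2 := by positivity
  have hs : 0 < √(2 + a ^ 2) := by positivity
  have h0 : HasDerivAt (fun a : ℝ => 2 + a ^ 2) (2 * a) a := by
    simpa using (hasDerivAt_pow 2 a).const_add 2
  have h1 := (((hasDerivAt_id a).div (h0.sqrt hp.ne') hs.ne').arctan).const_mul (1 / (2 * π))
  refine h1.congr_deriv ?_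
  have hq : √(2 + a ^ 2) ^ 2 = 2 + a ^ 2 := Real.sq_sqrt hp.le
  have h6 : 1 + (a / √(2 + a ^ 2)) ^ 2 = 2 * (1 + a ^ 2) / (2 + a ^ 2) := by
    rw [div_pow, hq]; field_simp; ring
  simp only [Pi.div_apply, id]
  rw [h6, hq]
  have h7 : 1 * √(2 + a ^ 2) - a * (2 * a / (2 * √(2 + a ^ 2))) = 2 / √(2 + a ^ 2) := by
    field_simp
    rw [hq]; ring
  rw [h7]
  field_simp

lemma F_eq (a : ℝ) : ∫ z, stdNormalCDF z * stdNormalCDF (a * z) ∂(gaussianReal 0 1)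
    = 1 / 4 + (1 / (2 * π)) * arctan (a / √(2 + a ^ 2)) := by
  have hd : ∀ a, HasDerivAt (fun a => (∫ z, stdNormalCDF z * stdNormalCDF (a * z) ∂(gaussianReal 0 1))
      - (1 / (2 * π)) * arctan (a / √(2 + a ^ 2))) 0 a := fun a => by
    exact ((F_deriv a).sub (G_deriv a)).congr_deriv (by ring)
  have := is_const_of_deriv_eq_zero (fun a => (hd a).differentiableAt) (fun a => (hd a).deriv) a 0
  simp only [zero_mul, cdf_zero, integral_mul_const, cdf_mean, zero_div, arctan_zero] at this
  linarith

lemma cov_key (ρ : ℝ) (hρ : ρ ∈ Set.Icc (-1 : ℝ) 1) :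
    ∫ z, stdNormalCDF z * stdNormalCDF (ρ / √(2 - ρ ^ 2) * z) ∂(gaussianReal 0 1)
    = 1 / 4 + (1 / (2 * π)) * arcsin (ρ / 2) := by
  have h1 : ρ ^ 2 ≤ 1 := by nlinarith [hρ.1, hρ.2]
  have hp : 0 < 2 - ρ ^ 2 := by linarith
  rw [F_eq, arcsin_eq_arctan ⟨by linarith [hρ.1], by linarith [hρ.2]⟩]
  congr 3
  have e1 : 2 + (ρ / √(2 - ρ ^ 2)) ^ 2 = (2 ^ 2 * (1 - (ρ / 2) ^ 2)) / (2 - ρ ^ 2) := by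
    rw [div_pow, Real.sq_sqrt hp.le]; field_simp; ring
  have h3 : 0 < 1 - (ρ / 2) ^ 2 := by nlinarith
  rw [e1, Real.sqrt_div (by positivity), Real.sqrt_mul (by positivity),
    Real.sqrt_sq (by norm_num)]
  have := Real.sqrt_pos.2 h3
  have := Real.sqrt_pos.2 hp
  field_simp

lemma cdf_second : ∫ z, stdNormalCDF z ^ 2 ∂(gaussianReal 0 1) = 1 / 3 := by
  have := cov_key 1 (by simp)
  have h2 : arcsin (1 / 2) = π / 6 := by
    rw [← sin_pi_div_six, arcsin_sin] <;> linarith [pi_pos]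
  rw [h2] at this
  norm_num at this
  simp only [sq]
  rw [this]
  field_simp
  norm_num

lemma law_facts {Ω : Type*} [MeasurableSpace Ω] (P : Measure Ω) (Z : Ω → ℝ) (hZm : Measurable Z)
    (hZ : Measure.map Z P = gaussianReal 0 1) :
    (∫ ω, stdNormalCDF (Z ω) ∂P) = 1 / 2 ∧ (∫ ω, stdNormalCDF (Z ω) ^ 2 ∂P) = 1 / 3 := by
  have hc := cdf_cont
  constructor
  · rw [← cdf_mean, ← hZ, integral_map hZm.aemeasurable hc.aestronglyMeasurable]
  · rw [← cdf_second, ← hZ, integral_map hZm.aemeasurable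
      (by fun_prop : Continuous _).aestronglyMeasurable]

/-- For a bivariate standard Gaussian vector `(Z, Z₂)` with correlation `ρ`, the covariance
of the uniforms `Φ(Z)` and `Φ(Z₂)` is `(1/(2π)) arcsin(ρ/2)`; their variances are `1/12`,
so the uniform correlation `ρ_U` satisfies `ρ = 2 sin((π/6) ρ_U)`. -/
theorem stmt12 {Ω : Type*} [MeasurableSpace Ω] (P : Measure Ω) [IsProbabilityMeasure P]
    (Z W : Ω → ℝ) (hZm : Measurable Z) (hWm : Measurable W)
    (hZ : Measure.map Z P = gaussianReal 0 1) (hW : Measure.map W P = gaussianReal 0 1)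
    (hindep : IndepFun Z W P)
    (ρ : ℝ) (hρ : ρ ∈ Set.Icc (-1 : ℝ) 1)
    (Z₂ : Ω → ℝ) (hZ₂ : ∀ ω, Z₂ ω = ρ * Z ω + Real.sqrt (1 - ρ ^ 2) * W ω) :
    (∫ ω, stdNormalCDF (Z ω) * stdNormalCDF (Z₂ ω) ∂P)
        - (∫ ω, stdNormalCDF (Z ω) ∂P) * (∫ ω, stdNormalCDF (Z₂ ω) ∂P)
      = (1 / (2 * π)) * Real.arcsin (ρ / 2) ∧
    (∫ ω, stdNormalCDF (Z ω) ^ 2 ∂P) - (∫ ω, stdNormalCDF (Z ω) ∂P) ^ 2 = 1 / 12 ∧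
    (∫ ω, stdNormalCDF (Z₂ ω) ^ 2 ∂P) - (∫ ω, stdNormalCDF (Z₂ ω) ∂P) ^ 2 = 1 / 12 ∧
    ρ = 2 * Real.sin ((π / 6) *
      (((∫ ω, stdNormalCDF (Z ω) * stdNormalCDF (Z₂ ω) ∂P)
          - (∫ ω, stdNormalCDF (Z ω) ∂P) * (∫ ω, stdNormalCDF (Z₂ ω) ∂P)) /
        Real.sqrt ((1 / 12) * (1 / 12)))) := by
  have hc := cdf_cont
  have h1 : ρ ^ 2 ≤ 1 := by nlinarith [hρ.1, hρ.2]
  set s := √(1 - ρ ^ 2) with hs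
  have hs2 : s ^ 2 = 1 - ρ ^ 2 := Real.sq_sqrt (by linarith)
  have hZ₂' : Z₂ = (fun ω => ρ * Z ω) + (fun ω => s * W ω) := funext hZ₂
  have hZ₂m : Measurable Z₂ := by rw [hZ₂']; fun_prop
  have hlaw : Measure.map Z₂ P = gaussianReal 0 1 := by
    have hi : IndepFun (fun ω => ρ * Z ω) (fun ω => s * W ω) P :=
      hindep.comp (φ := fun x => ρ * x) (ψ := fun x => s * x) (by fun_prop) (by fun_prop)
    have ha : P.map (fun ω => ρ * Z ω) = (gaussianReal 0 1).map (ρ * ·) := by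
      rw [← hZ, Measure.map_map (by fun_prop) hZm]; rfl
    have hb : P.map (fun ω => s * W ω) = (gaussianReal 0 1).map (s * ·) := by
      rw [← hW, Measure.map_map (by fun_prop) hWm]; rfl
    rw [gaussianReal_map_const_mul] at ha hb
    rw [hZ₂', gaussianReal_add_gaussianReal_of_indepFun hi ha hb]
    congr 1
    · simp
    · ext
      simp [hs2]
  obtain ⟨a1, a2⟩ := law_facts P Z hZm hZ
  obtain ⟨b1, b2⟩ := law_facts P Z₂ hZ₂m hlaw
  have hjoint : P.map (fun ω => (Z ω, W ω)) = (gaussianReal 0 1).prod (gaussianReal 0 1) := by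
    rw [(indepFun_iff_map_prod_eq_prod_map_map hZm.aemeasurable hWm.aemeasurable).1 hindep, hZ, hW]
  have hcov : ∫ ω, stdNormalCDF (Z ω) * stdNormalCDF (Z₂ ω) ∂P
      = 1 / 4 + (1 / (2 * π)) * arcsin (ρ / 2) := by
    have hcont : Continuous fun p : ℝ × ℝ => stdNormalCDF p.1 * stdNormalCDF (ρ * p.1 + s * p.2) := by
      fun_prop
    have e1 : ∫ ω, stdNormalCDF (Z ω) * stdNormalCDF (Z₂ ω) ∂P
        = ∫ p, stdNormalCDF p.1 * stdNormalCDF (ρ * p.1 + s * p.2)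
            ∂((gaussianReal 0 1).prod (gaussianReal 0 1)) := by
      rw [← hjoint, integral_map (hZm.prodMk hWm).aemeasurable hcont.aestronglyMeasurable]
      simp only [hZ₂]
    rw [e1, integral_prod _ (Integrable.of_bound (C := 1) hcont.aestronglyMeasurable
      (ae_of_all _ fun z => by
        rw [norm_mul]
        exact mul_le_one₀ (cdf_norm_le _) (norm_nonneg _) (cdf_norm_le _))), ← cov_key ρ hρ]
    congr 1
    ext z
    dsimp only
    rw [integral_const_mul, cdf_smooth, hs2, show 1 + (1 - ρ ^ 2) = 2 - ρ ^ 2 by ring]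
    congr 2
    ring
  rw [hcov, a1, a2, b1, b2]
  have hC : (1 / 4 + 1 / (2 * π) * arcsin (ρ / 2) - 1 / 2 * (1 / 2))
      = 1 / (2 * π) * arcsin (ρ / 2) := by ring
  refine ⟨hC, by norm_num, by norm_num, ?_⟩
  rw [hC, Real.sqrt_mul_self (by norm_num)]
  have : π / 6 * (1 / (2 * π) * arcsin (ρ / 2) / (1 / 12)) = arcsin (ρ / 2) := by
    field_simp
    ring
  rw [this, sin_arcsin (by linarith [hρ.1]) (by linarith [hρ.2])]
  ring
end
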